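/- arXiv:math/0406441 — 6 statements merged into one kernel-verified Lean document; each statement's English description precedes it below -/
import Mathlib

section
/- Let μ be an infinite cardinal. There is no μ-mad family of cardinality exactly cf(μ); that is, cf(μ) ∉ MAD(μ). -/
/-!
Enumerate the family as `A i`, where `i` runs over a set `S` of order type `cf μ` that is cofinal
in `μ`. A union of fewer than `cf μ` sets of size `< μ` has size `< μ` (`mk_iUnion_lt_of_lt_cof`),
so `B i = A i \ ⋃ j < i, A j` still has size `μ`, and the sets `B i` are pairwise disjoint.
Pick `C i ⊆ B i` of size `#(Iic i) < μ`, the initial segment being taken in `μ`, and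
let `C = ⋃ i, C i`. Since `S` is cofinal, the segments `Iic i` cover `μ`, so `#C = μ`. On the other
hand `C i` misses `A j` for `j < i`, so `C ∩ A j` lies in `⋃ i ≤ j, C i`, which has size `< μ`.
Hence `C` can be added to the family, which is therefore not maximal.
-/

universe u
open Cardinal

/-- A family `𝒜` of subsets of `α` is `μ`-almost disjoint: its union has size `μ`,
each member has size `μ`, and distinct members intersect in a set of size `< μ`. -/
def IsADFamily (μ : Cardinal.{u}) {α : Type u} (𝒜 : Set (Set α)) : Prop :=
  #(⋃₀ 𝒜) = μ ∧ (∀ A ∈ 𝒜, #A = μ) ∧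
    ∀ A ∈ 𝒜, ∀ B ∈ 𝒜, A ≠ B → #(↥(A ∩ B)) < μ

/-- `𝒜` is maximal `μ`-almost disjoint: it is `μ`-ad and no new set `C ⊆ ⋃₀ 𝒜`
can be added keeping the family `μ`-almost disjoint. -/
def IsMadFamily (μ : Cardinal.{u}) {α : Type u} (𝒜 : Set (Set α)) : Prop :=
  IsADFamily μ 𝒜 ∧ ¬∃ C, C ⊆ ⋃₀ 𝒜 ∧ C ∉ 𝒜 ∧ IsADFamily μ (insert C 𝒜)

/-- `MADSet μ` is the set of cardinalities of nontrivial `μ`-mad families,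
i.e. `μ`-mad families with at least `cf μ` members. -/
def MADSet (μ : Cardinal.{u}) : Set Cardinal.{u} :=
  {c | ∃ 𝒜 : Set (Set μ.out), IsMadFamily μ 𝒜 ∧ μ.ord.cof ≤ #𝒜 ∧ #𝒜 = c}

/-- A union of fewer than `cf μ` sets, each of size `< μ`, has size `< μ`. -/
lemma mk_iUnion_lt_of_lt_cof {μ : Cardinal.{u}} (hμ : ℵ₀ ≤ μ) {ι α : Type u} (s : ι → Set α)
    (hι : #ι < μ.ord.cof) (hs : ∀ i, #(s i) < μ) : #(⋃ i, s i) < μ :=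
  (mk_iUnion_le s).trans_lt <|
    mul_lt_of_lt hμ (hι.trans_le (Ordinal.cof_ord_le μ)) (iSup_lt_of_lt_cof_ord hι hs)

/-- Any `μ`-almost disjoint family indexed by a cofinal subset `S` of `μ` of order type `cf μ`
admits a set `C` of size `μ` in its union that is almost disjoint from all of its members. -/
lemma exists_almost_disjoint {μ : Cardinal.{u}} (hμ : ℵ₀ ≤ μ) {α : Type u}
    {S : Set μ.ord.ToType} (hS : IsCofinal S) (hT : Ordinal.type (α := S) (· < ·) = μ.ord.cof.ord)
    (A : S → Set α) (hA : ∀ i, #(A i) = μ) (hAd : ∀ i j, i ≠ j → #(↥(A i ∩ A j)) < μ) :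
    ∃ C ⊆ ⋃ i, A i, μ ≤ #C ∧ ∀ j, #(↥(C ∩ A j)) < μ := by
  have hcard : #S = μ.ord.cof := by
    have := congrArg Ordinal.card hT
    simpa using this
  have hcof : ℵ₀ ≤ μ.ord.cof := by
    rw [Ordinal.aleph0_le_cof_iff, Ordinal.one_lt_cof_iff]
    exact isSuccLimit_ord hμ
  have hord : ord #S = Ordinal.type (α := S) (· < ·) := by rw [hcard, hT]
  have hIio (i : S) : #(Set.Iio i) < μ.ord.cof := hcard ▸ mk_Iio_lt i hord
  have hIic (i : S) : #(Set.Iic i) < μ.ord.cof := hcard ▸ mk_Iic_lt i hord (hcard ▸ hcof)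
  have hseg (i : S) : #(Set.Iic i.1) < μ := by
    have := mk_Iic_lt i.1 (by simp) (by simpa using hμ)
    simpa using this
  have hB (i : S) : #(Set.Iic i.1) ≤ #(↥(A i \ ⋃ j : Set.Iio i, A j)) := by
    by_contra! h
    have h1 : #(⋃ j : Set.Iio i, A i ∩ A j : Set α) < μ :=
      mk_iUnion_lt_of_lt_cof hμ _ (hIio i) fun j => hAd _ _ (ne_of_gt j.2)
    rw [← Set.inter_iUnion] at h1
    refine (add_lt_of_lt hμ h1 (h.trans (hseg i))).not_ge ?_
    calc μ = #(A i) := (hA i).symm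
      _ = #(↥((A i ∩ ⋃ j : Set.Iio i, A j) ∪ (A i \ ⋃ j : Set.Iio i, A j))) := by
        rw [Set.inter_union_sdiff]
      _ ≤ _ := mk_union_le _ _
  choose C hCB hC using fun i => le_mk_iff_exists_subset.1 (hB i)
  -- `C i` avoids every earlier member of the family.
  have hCA {i j : S} (hji : j < i) {x : α} (hx : x ∈ C i) : x ∉ A j := fun hxj =>
    (hCB i hx).2 (Set.mem_iUnion.2 ⟨⟨j, hji⟩, hxj⟩)
  refine ⟨⋃ i, C i, Set.iUnion_mono fun i x hx => (hCB i hx).1, ?_, fun j => ?_⟩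
  · have hdisj : Pairwise (Function.onFun Disjoint C) := by
      intro i j hij
      refine Set.disjoint_left.2 fun x hi hj => ?_
      rcases lt_or_gt_of_ne hij with h | h
      · exact hCA h hj (hCB i hi).1
      · exact hCA h hi (hCB j hj).1
    rw [mk_iUnion_eq_sum_mk hdisj]
    simp_rw [hC]
    refine le_trans ?_ mk_iUnion_le_sum_mk
    have : (⋃ i : S, Set.Iic i.1) = Set.univ := by
      rw [Set.eq_univ_iff_forall]
      intro x
      obtain ⟨y, hy, hxy⟩ := hS x
      exact Set.mem_iUnion.2 ⟨⟨y, hy⟩, hxy⟩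
    rw [this]
    simp
  · refine (mk_le_mk_of_subset ?_).trans_lt (mk_iUnion_lt_of_lt_cof hμ
      (fun i : Set.Iic j => C i) (hIic j) fun i => (hC i).trans_lt (hseg i))
    rintro x ⟨hx, hxj⟩
    obtain ⟨i, hi⟩ := Set.mem_iUnion.1 hx
    exact Set.mem_iUnion.2 ⟨⟨i, not_lt.1 fun h => hCA h hi hxj⟩, hi⟩

/-- There is no μ-mad family of cardinality exactly cf(μ): cf(μ) ∉ MAD(μ). -/
theorem stmt1 (μ : Cardinal.{u}) (hμ : ℵ₀ ≤ μ) : μ.ord.cof ∉ MADSet μ := by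
  rintro ⟨𝒜, ⟨⟨hU, hA, hAd⟩, hmax⟩, -, hcard⟩
  obtain ⟨S, hS, hT⟩ := Ordinal.exists_ord_cof_eq μ.ord.ToType
  rw [Ordinal.cof_toType] at hT
  have hSc : #S = #𝒜 := by
    have := congrArg Ordinal.card hT
    simpa [hcard] using this
  obtain ⟨e⟩ := Cardinal.eq.1 hSc
  obtain ⟨C, hCU, hCμ, hCA⟩ := exists_almost_disjoint hμ hS hT (fun i => (e i : Set μ.out))
    (fun i => hA _ (e i).2) fun i j hij => hAd _ (e i).2 _ (e j).2 fun h =>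
      hij (e.injective (Subtype.ext h))
  have hCU' : C ⊆ ⋃₀ 𝒜 := hCU.trans <| Set.iUnion_subset fun i => Set.subset_sUnion_of_mem (e i).2
  have hCA' : ∀ B ∈ 𝒜, #(↥(C ∩ B)) < μ := fun B hB => by
    simpa using hCA (e.symm ⟨B, hB⟩)
  have hCe : #C = μ := le_antisymm ((mk_le_mk_of_subset hCU').trans hU.le) hCμ
  refine hmax ⟨C, hCU', fun hC => ?_, ?_, ?_, ?_⟩
  · have := hCA' C hC
    rw [Set.inter_self, hCe] at this
    exact this.false
  · rwa [Set.sUnion_insert, Set.union_eq_right.2 hCU']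
  · rintro B (rfl | hB)
    exacts [hCe, hA B hB]
  · rintro B (rfl | hB) D (rfl | hD) hne
    · exact absurd rfl hne
    · exact hCA' D hD
    · rw [Set.inter_comm]
      exact hCA' B hB
    · exact hAd B hB D hD hne
end

section
/- Let μ be a singular cardinal. Then MAD(cf(μ)) ⊆ MAD(μ): every cardinal which is the size of a nontrivial cf(μ)-mad family is also the size of a nontrivial μ-mad family. -/
/-!
Write `κ = cf μ`. The set `μ` is partitioned into `κ` nonempty pieces, each of size `< μ`, such that
among any `κ` of the pieces there are pieces of size above any given `ν < μ`; the partition is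
encoded by the map `p : μ → κ` sending a point to the index of its piece
(`exists_partition_map`). The piece sizes come from a cofinal subset of `μ` of order type `κ`.

A `κ`-mad family `𝒜` is pulled back to `{p⁻¹(A) : A ∈ 𝒜}`, which has the same cardinality since
`p` is surjective. A set of indices of size `κ` has preimage of size `μ`, and a set of indices of
size `< κ` has preimage of size `< μ` (`mk_preimage_lt`), so the new family is
`μ`-almost disjoint. For maximality, let `C` be a set of size `μ` inside the union. The traces of
`C` on the pieces have sizes unbounded in `μ`, because `κ < μ`
(`exists_lt_mk_inter_fiber`). Choosing, for each `ξ < κ`, an index `d ξ` whose trace is larger than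
the `ξ`-th piece, the range `D` of `d` has size `κ`, so it meets some `A ∈ 𝒜` in a set
of size `κ`, and then `C` meets `p⁻¹(A)` in a set of size `μ`.
-/


universe u
open Cardinal

/-- A union of fewer than `μ` sets whose sizes have a common bound below `μ` has size below `μ`. -/
lemma mk_iUnion_lt_of_bound {μ ν : Cardinal.{u}} (hμ : ℵ₀ ≤ μ) {ι α : Type u} (f : ι → Set α)
    (hι : #ι < μ) (hν : ν < μ) (hf : ∀ i, #(f i) ≤ ν) : #(⋃ i, f i) < μ :=
  ((mk_iUnion_le f).trans (mul_le_mul_right (ciSup_le' hf) _)).trans_lt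
    (mul_lt_of_lt hμ hι hν)

/-- A function from `cf μ` to nonzero cardinals below `μ` that is unbounded in
`μ` on every set of `cf μ` indices. It is `x ↦ #(Iic x)` on a cofinal subset of `μ` of
order type `cf μ`. -/
lemma exists_sizes (μ : Cardinal.{u}) (hμ : ℵ₀ ≤ μ) (hsing : μ.ord.cof < μ) :
    ∃ h : μ.ord.cof.out → Cardinal.{u}, (∀ i, h i ≠ 0) ∧ (∀ i, h i < μ) ∧
      ∀ S : Set μ.ord.cof.out, μ.ord.cof ≤ #S → ∀ ν < μ, ∃ i ∈ S, ν < h i := by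
  obtain ⟨s, hs, hst⟩ := Ordinal.exists_ord_cof_eq μ.ord.ToType
  rw [Ordinal.cof_toType] at hst
  have hcard : #s = μ.ord.cof := by
    have := congrArg Ordinal.card hst
    simpa using this
  obtain ⟨e⟩ : Nonempty (μ.ord.cof.out ≃ s) := Cardinal.eq.1 (by rw [mk_out, hcard])
  have hmk : #μ.ord.ToType = μ := by simp
  refine ⟨fun i => #(Set.Iic (e i : μ.ord.ToType)), fun i => ?_, fun i => ?_, ?_⟩
  · rw [mk_ne_zero_iff]
    exact ⟨⟨_, Set.self_mem_Iic⟩⟩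
  · have := mk_Iic_lt (e i : μ.ord.ToType) (by simp) (by rw [hmk]; exact hμ)
    rwa [hmk] at this
  · intro S hS ν hν
    by_contra! hcon
    have hcof : ∀ y : s, ∃ i ∈ S, y ≤ e i := by
      intro y
      by_contra! hy
      have h1 : #(Set.Iio y) < #s := mk_Iio_lt y (by rw [hcard, hst])
      have h2 : #S ≤ #(Set.Iio y) :=
        mk_le_of_injective (f := fun i : S => (⟨e i, hy i i.2⟩ : Set.Iio y)) (by
          intro a b hab
          simpa [Subtype.ext_iff] using hab)
      exact absurd (hS.trans h2) (by rw [← hcard]; exact not_le.2 h1)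
    have hU : (⋃ i : S, Set.Iic (e i : μ.ord.ToType)) = Set.univ := by
      refine Set.eq_univ_of_forall fun x => ?_
      obtain ⟨y, hy, hxy⟩ := hs x
      obtain ⟨i, hi, hyi⟩ := hcof ⟨y, hy⟩
      exact Set.mem_iUnion.2 ⟨⟨i, hi⟩, hxy.trans hyi⟩
    have hlt := mk_iUnion_lt_of_bound hμ (fun i : S => Set.Iic (e i : μ.ord.ToType))
      ((mk_set_le S).trans_lt (by rwa [mk_out])) hν (fun i => hcon i i.2)
    rw [hU, mk_univ, hmk] at hlt
    exact lt_irrefl _ hlt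

/-- The partition of `μ` into `cf μ` pieces, as the map sending a point to the index of its
piece. -/
lemma exists_partition_map (μ : Cardinal.{u}) (hμ : ℵ₀ ≤ μ) (hsing : μ.ord.cof < μ) :
    ∃ p : μ.out → μ.ord.cof.out, Function.Surjective p ∧ (∀ i, #(p ⁻¹' {i}) < μ) ∧
      ∀ S : Set μ.ord.cof.out, μ.ord.cof ≤ #S → ∀ ν < μ, ∃ i ∈ S, ν < #(p ⁻¹' {i}) := by
  obtain ⟨h, h0, hlt, hS⟩ := exists_sizes μ hμ hsing
  have hsum : #(Σ i, (h i).out) = μ := by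
    rw [mk_sigma]
    simp only [mk_out]
    apply le_antisymm
    · refine (sum_le_mk_mul_iSup h).trans ?_
      rw [mk_out]
      exact (mul_le_mul' hsing.le (ciSup_le' fun i => (hlt i).le)).trans (mul_eq_self hμ).le
    · by_contra! hcon
      obtain ⟨i, -, hi⟩ := hS Set.univ (by simp) _ hcon
      exact absurd (le_sum h i) (not_le.2 hi)
  obtain ⟨e⟩ : Nonempty (μ.out ≃ Σ i, (h i).out) := Cardinal.eq.1 (by rw [mk_out, hsum])
  have hfib : ∀ i, #((fun x => (e x).1) ⁻¹' {i}) = h i := by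
    intro i
    rw [← mk_out (h i)]
    refine mk_congr ⟨fun x => cast (by rw [show (e x.1).1 = i from x.2]) (e x.1).2, fun y => ⟨e.symm ⟨i, y⟩, by simp⟩,
      ?_, fun y => ?_⟩
    · rintro ⟨x, rfl⟩
      simp
    · apply eq_of_heq
      refine (cast_heq _ _).trans ?_
      rw [e.apply_symm_apply]
  refine ⟨fun x => (e x).1, fun i => ?_, fun i => by rw [hfib]; exact hlt i, ?_⟩
  · obtain ⟨x⟩ := mk_ne_zero_iff.1 (by rw [hfib]; exact h0 i :
      #((fun x => (e x).1) ⁻¹' {i}) ≠ 0)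
    exact ⟨x.1, x.2⟩
  · intro S hc ν hν
    simpa only [hfib] using hS S hc ν hν

/-- Fewer than `cf μ` pieces, each of size below `μ`, have union of size below `μ`. -/
lemma mk_preimage_lt {μ : Cardinal.{u}} (hμ : ℵ₀ ≤ μ) (hsing : μ.ord.cof < μ) {α ι : Type u}
    (p : α → ι) (hp : ∀ i, #(p ⁻¹' {i}) < μ) (S : Set ι) (hS : #S < μ.ord.cof) :
    #(p ⁻¹' S) < μ := by
  have hU : p ⁻¹' S = ⋃ i : S, p ⁻¹' {(i : ι)} := by
    ext x; simp
  rw [hU]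
  exact mk_iUnion_lt_of_bound hμ _ (hS.trans hsing)
    (iSup_lt_of_lt_cof_ord hS fun i => hp i) (le_ciSup (bddAbove_of_small))

/-- A set of size `μ` has traces of unboundedly large size below `μ` on the pieces of a partition
into fewer than `μ` pieces. -/
lemma exists_lt_mk_inter_fiber {μ : Cardinal.{u}} (hμ : ℵ₀ ≤ μ) {α ι : Type u}
    (hι : #ι < μ) (p : α → ι) (C : Set α) (hC : #C = μ) {ν : Cardinal.{u}} (hν : ν < μ) :
    ∃ i, ν < #(↥(C ∩ p ⁻¹' {i})) := by
  by_contra! hcon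
  have hU : C = ⋃ i, C ∩ p ⁻¹' {i} := by
    ext x; simp
  have := mk_iUnion_lt_of_bound hμ _ hι hν hcon
  rw [← hU, hC] at this
  exact lt_irrefl _ this

/-- In a mad family, every full-size subset of the union meets some member in full size. -/
lemma IsMadFamily.exists_le_mk_inter {κ : Cardinal.{u}} {α : Type u} {𝒜 : Set (Set α)}
    (h : IsMadFamily κ 𝒜) {D : Set α} (hD : D ⊆ ⋃₀ 𝒜) (hDc : #D = κ) :
    ∃ A ∈ 𝒜, κ ≤ #(↥(D ∩ A)) := by
  obtain ⟨⟨hU, hA, had⟩, hmax⟩ := h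
  by_cases hDA : D ∈ 𝒜
  · exact ⟨D, hDA, by rw [Set.inter_self, hDc]⟩
  by_contra! hcon
  refine hmax ⟨D, hD, hDA, ?_, ?_, ?_⟩
  · rw [Set.sUnion_insert, Set.union_eq_right.2 hD, hU]
  · rintro A (rfl | h)
    exacts [hDc, hA A h]
  · rintro A (rfl | h) B (rfl | h') hne
    · exact absurd rfl hne
    · exact hcon B h'
    · rw [Set.inter_comm]; exact hcon A h
    · exact had A h B h' hne

/-- For a singular cardinal μ, MAD(cf μ) ⊆ MAD(μ). -/
theorem stmt2 (μ : Cardinal.{u}) (hμ : ℵ₀ ≤ μ) (hsing : μ.ord.cof < μ) :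
    MADSet μ.ord.cof ⊆ MADSet μ := by
  rintro c ⟨𝒜, hmad, hnt, rfl⟩
  rw [Ordinal.cof_ord_cof] at hnt
  obtain ⟨p, hsurj, hfib, hbig⟩ := exists_partition_map μ hμ hsing
  have hinj : Function.Injective (Set.preimage p) := hsurj.preimage_injective
  have hcard : #(Set.preimage p '' 𝒜) = #𝒜 := mk_image_eq hinj
  have hfull : ∀ S : Set μ.ord.cof.out, #S = μ.ord.cof → #(p ⁻¹' S) = μ := by
    intro S hS
    refine le_antisymm ((mk_set_le _).trans_eq (mk_out μ)) ?_
    by_contra! hcon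
    obtain ⟨i, hi, hlt⟩ := hbig S hS.ge _ hcon
    exact absurd (mk_le_mk_of_subset (Set.preimage_mono (Set.singleton_subset_iff.2 hi)))
      (not_le.2 hlt)
  have hU : ⋃₀ (Set.preimage p '' 𝒜) = p ⁻¹' ⋃₀ 𝒜 := by
    rw [Set.sUnion_image, Set.preimage_sUnion]
  refine ⟨Set.preimage p '' 𝒜, ⟨⟨?_, ?_, ?_⟩, ?_⟩, hnt.trans_eq hcard.symm, hcard⟩
  · rw [hU]
    exact hfull _ hmad.1.1
  · rintro _ ⟨A, hA, rfl⟩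
    exact hfull A (hmad.1.2.1 A hA)
  · rintro _ ⟨A, hA, rfl⟩ _ ⟨B, hB, rfl⟩ hne
    rw [← Set.preimage_inter]
    exact mk_preimage_lt hμ hsing p hfib _
      (hmad.1.2.2 A hA B hB fun h => hne (by rw [h]))
  · rintro ⟨C, hCU, hCn, -, hCsize, hCad⟩
    have hC : #C = μ := hCsize C (Set.mem_insert _ _)
    choose d hd using fun ξ => exists_lt_mk_inter_fiber hμ (by rwa [mk_out]) p C hC (hfib ξ)
    have hDU : Set.range d ⊆ ⋃₀ 𝒜 := by
      rintro _ ⟨ξ, rfl⟩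
      obtain ⟨x, hxC, hx⟩ := mk_ne_zero_iff.1 (ne_bot_of_gt (hd ξ))
      have := hCU hxC
      rw [hU] at this
      rwa [← (show p x = d ξ from hx)]
    have hDc : #(Set.range d) = μ.ord.cof := by
      refine le_antisymm ((mk_set_le _).trans_eq (mk_out _)) ?_
      by_contra! hcon
      obtain ⟨ξ, -, hξ⟩ := hbig Set.univ (by simp) _ (mk_preimage_lt hμ hsing p hfib _ hcon)
      refine absurd (mk_le_mk_of_subset ?_) (not_le.2 (hξ.trans (hd ξ)))
      rintro x ⟨-, hx⟩
      exact ⟨ξ, hx.symm⟩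
    obtain ⟨A, hA, hDA⟩ := hmad.exists_le_mk_inter hDU hDc
    have hlt : #(↥(C ∩ p ⁻¹' A)) < μ :=
      hCad C (Set.mem_insert _ _) _ (Set.mem_insert_of_mem _ ⟨A, hA, rfl⟩)
        fun h => hCn ⟨A, hA, h.symm⟩
    -- `d` maps `d ⁻¹' A` onto `range d ∩ A`, so there are `cf μ` indices `ξ` with `d ξ ∈ A`.
    have hpre : μ.ord.cof ≤ #(d ⁻¹' A) := by
      refine hDA.trans ?_
      rw [Set.inter_comm, ← Set.image_preimage_eq_inter_range]
      exact mk_image_le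
    obtain ⟨ξ, hξ, hξlt⟩ := hbig _ hpre _ hlt
    refine absurd (mk_le_mk_of_subset ?_) (not_le.2 (hξlt.trans (hd ξ)))
    rintro x ⟨hxC, hx⟩
    refine ⟨hxC, ?_⟩
    rw [Set.mem_preimage, show p x = d ξ from hx]
    exact hξ
end

section
/- Let μ be an infinite cardinal and suppose λ = sup_{i<θ} λ_i, where θ < λ and each λ_i ∈ MAD(μ). Then λ ∈ MAD(μ). (In other words, MAD(μ) is closed under singular suprema.) -/
/-!
Since `#ι < lam = ⨆ i, lams i`, some `lams i₀` exceeds `#ι`; let `ℬ` be a nontrivial mad family of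
that size and pick distinct members `f i ∈ ℬ` for `i : ι`. A mad family of size `lams i` can be
copied onto `f i`, because `f i` has size `μ` (`exists_mad_sUnion_eq`). Replacing each `f i` in `ℬ`
by such a copy, and keeping the other members, gives a family that is still mad (`mad_biUnion`):
a set of size `μ` meets some member `B` of `ℬ` in size `μ`, and inside `B` it meets some member of
the family replacing `B` in size `μ`. The new family is a union of at most `lam` families of size
at most `lam`, and it contains one of size `lams i` for each `i`, so its size is exactly `lam`.
-/

universe u
open Cardinal

/-- Maximality restated positively: every set of size `μ` inside the union meets some member of the
family in a set of size `μ`. -/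
lemma mad_iff {μ : Cardinal.{u}} {α : Type u} {𝒜 : Set (Set α)} :
    IsMadFamily μ 𝒜 ↔ IsADFamily μ 𝒜 ∧
      ∀ C, C ⊆ ⋃₀ 𝒜 → #C = μ → ∃ A ∈ 𝒜, μ ≤ #(↥(C ∩ A)) := by
  refine and_congr_right fun had => ?_
  obtain ⟨h1, h2, h3⟩ := had
  constructor
  · intro h C hC hCμ
    by_contra! hlt
    refine h ⟨C, hC, fun hmem => ?_, ?_, ?_, ?_⟩
    · have := hlt C hmem
      rw [Set.inter_self, hCμ] at this
      exact lt_irrefl _ this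
    · rw [Set.sUnion_insert, Set.union_eq_right.2 hC, h1]
    · rintro A (rfl | hA)
      · exact hCμ
      · exact h2 A hA
    · rintro A (rfl | hA) B (rfl | hB) hAB
      · exact absurd rfl hAB
      · exact hlt B hB
      · rw [Set.inter_comm]; exact hlt A hA
      · exact h3 A hA B hB hAB
  · rintro h ⟨C, hC, hn, -, h2', h3'⟩
    obtain ⟨A, hA, hle⟩ := h C hC (h2' C (Set.mem_insert _ _))
    exact absurd (h3' C (Set.mem_insert _ _) A (Set.mem_insert_of_mem _ hA)
      (fun h => hn (h ▸ hA))) (not_lt.2 hle)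

lemma mad_singleton {μ : Cardinal.{u}} {α : Type u} {S : Set α} (hS : #S = μ) :
    IsMadFamily μ {S} := by
  refine mad_iff.2 ⟨⟨by rw [Set.sUnion_singleton, hS], ?_, ?_⟩, ?_⟩
  · rintro A rfl; exact hS
  · rintro A rfl B rfl h; exact absurd rfl h
  · intro C hC hCμ
    rw [Set.sUnion_singleton] at hC
    exact ⟨S, rfl, by rw [Set.inter_eq_left.2 hC, hCμ]⟩

/-- A mad family can be copied along an injection defined on its union. -/
lemma mad_image {μ : Cardinal.{u}} {α : Type u} {𝒜 : Set (Set α)} (h : IsMadFamily μ 𝒜)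
    (φ : α → α) (hφ : Set.InjOn φ (⋃₀ 𝒜)) :
    IsMadFamily μ ((fun A => φ '' A) '' 𝒜) ∧ ⋃₀ ((fun A => φ '' A) '' 𝒜) = φ '' ⋃₀ 𝒜 ∧
      #((fun A => φ '' A) '' 𝒜) = #𝒜 := by
  obtain ⟨⟨h1, h2, h3⟩, h4⟩ := mad_iff.1 h
  have hU : ⋃₀ ((fun A => φ '' A) '' 𝒜) = φ '' ⋃₀ 𝒜 := by
    rw [Set.sUnion_image, Set.sUnion_eq_biUnion, Set.image_iUnion₂]
  have hsub : ∀ A ∈ 𝒜, A ⊆ ⋃₀ 𝒜 := fun A hA => Set.subset_sUnion_of_mem hA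
  have hcard : ∀ C ⊆ ⋃₀ 𝒜, #(φ '' C) = #C := fun C hC =>
    Cardinal.mk_image_eq_of_injOn _ _ (hφ.mono hC)
  refine ⟨mad_iff.2 ⟨⟨by rw [hU, hcard _ subset_rfl, h1], ?_, ?_⟩, ?_⟩, hU, ?_⟩
  · rintro _ ⟨A, hA, rfl⟩
    exact (hcard A (hsub A hA)).trans (h2 A hA)
  · rintro _ ⟨A, hA, rfl⟩ _ ⟨B, hB, rfl⟩ hAB
    change #(↥(φ '' A ∩ φ '' B)) < μ
    rw [← hφ.image_inter (hsub A hA) (hsub B hB),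
      hcard _ (Set.inter_subset_left.trans (hsub A hA))]
    exact h3 A hA B hB (fun h => hAB (by rw [h]))
  · intro C hC hCμ
    rw [hU] at hC
    obtain ⟨C', hC', rfl⟩ := Set.subset_image_iff.1 hC
    rw [hcard C' hC'] at hCμ
    obtain ⟨A, hA, hle⟩ := h4 C' hC' hCμ
    refine ⟨_, ⟨A, hA, rfl⟩, ?_⟩
    change μ ≤ #(↥(φ '' C' ∩ φ '' A))
    rwa [← hφ.image_inter hC' (hsub A hA), hcard _ (Set.inter_subset_left.trans hC')]
  · refine Cardinal.mk_image_eq_of_injOn _ _ fun A hA B hB hAB => ?_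
    exact (hφ.image_eq_image_iff (hsub A hA) (hsub B hB)).1 hAB

/-- Each set of size `μ` is the union of a mad family of any size in `MADSet μ`. -/
lemma exists_mad_sUnion_eq {μ c : Cardinal.{u}} (hμ : ℵ₀ ≤ μ) (hc : c ∈ MADSet μ)
    (S : Set μ.out) (hS : #S = μ) :
    ∃ 𝒟 : Set (Set μ.out), IsMadFamily μ 𝒟 ∧ ⋃₀ 𝒟 = S ∧ #𝒟 = c := by
  classical
  obtain ⟨𝒜, h𝒜, -, rfl⟩ := hc
  obtain ⟨e⟩ := Cardinal.eq.1 (h𝒜.1.1.trans hS.symm)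
  have hne : Nonempty μ.out := by
    rw [← Cardinal.mk_ne_zero_iff, Cardinal.mk_out]
    exact (Cardinal.aleph0_pos.trans_le hμ).ne'
  let φ : μ.out → μ.out := fun x => if h : x ∈ ⋃₀ 𝒜 then e ⟨x, h⟩ else hne.some
  have hφe : ∀ x (h : x ∈ ⋃₀ 𝒜), φ x = e ⟨x, h⟩ := fun x h => dif_pos h
  have hinj : Set.InjOn φ (⋃₀ 𝒜) := by
    intro x hx y hy hxy
    rw [hφe x hx, hφe y hy] at hxy
    exact congrArg Subtype.val (e.injective (Subtype.ext hxy))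
  have himg : φ '' ⋃₀ 𝒜 = S := by
    ext y
    constructor
    · rintro ⟨x, hx, rfl⟩
      rw [hφe x hx]
      exact (e ⟨x, hx⟩).2
    · intro hy
      refine ⟨e.symm ⟨y, hy⟩, (e.symm ⟨y, hy⟩).2, ?_⟩
      rw [hφe _ (e.symm ⟨y, hy⟩).2]
      simp
  obtain ⟨h1, h2, h3⟩ := mad_image h𝒜 φ hinj
  exact ⟨_, h1, h2.trans himg, h3⟩

/-- Replacing each member `B` of a mad family by a mad family with union `B` gives a mad family. -/
lemma mad_biUnion {μ : Cardinal.{u}} {α : Type u} {ℬ : Set (Set α)} (h : IsMadFamily μ ℬ)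
    (D : ℬ → Set (Set α)) (hD : ∀ B, IsMadFamily μ (D B)) (hU : ∀ B, ⋃₀ D B = B) :
    IsMadFamily μ (⋃ B, D B) := by
  obtain ⟨⟨h1, -, h3⟩, h4⟩ := mad_iff.1 h
  have hUU : ⋃₀ (⋃ B, D B) = ⋃₀ ℬ := by
    rw [Set.sUnion_iUnion, Set.sUnion_eq_iUnion]
    exact Set.iUnion_congr hU
  have hsub : ∀ B, ∀ A ∈ D B, A ⊆ B := fun B A hA =>
    (Set.subset_sUnion_of_mem hA).trans (hU B).subset
  refine mad_iff.2 ⟨⟨by rw [hUU, h1], ?_, ?_⟩, ?_⟩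
  · intro A hA
    obtain ⟨B, hB⟩ := Set.mem_iUnion.1 hA
    exact (hD B).1.2.1 A hB
  · intro A hA A' hA' hne
    obtain ⟨B, hB⟩ := Set.mem_iUnion.1 hA
    obtain ⟨B', hB'⟩ := Set.mem_iUnion.1 hA'
    by_cases hBB : B = B'
    · subst hBB
      exact (hD B).1.2.2 A hB A' hB' hne
    · exact (Cardinal.mk_le_mk_of_subset
        (Set.inter_subset_inter (hsub B A hB) (hsub B' A' hB'))).trans_lt
        (h3 B B.2 B' B'.2 (fun h => hBB (Subtype.ext h)))
  · intro C hC hCμ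
    rw [hUU] at hC
    obtain ⟨B, hB, hle⟩ := h4 C hC hCμ
    obtain ⟨A, hA, hle'⟩ := (mad_iff.1 (hD ⟨B, hB⟩)).2 (C ∩ B)
      (Set.inter_subset_right.trans (hU ⟨B, hB⟩).superset)
      (le_antisymm ((Cardinal.mk_le_mk_of_subset Set.inter_subset_left).trans hCμ.le) hle)
    exact ⟨A, Set.mem_iUnion.2 ⟨_, hA⟩, hle'.trans (Cardinal.mk_le_mk_of_subset
      (Set.inter_subset_inter_left _ Set.inter_subset_left))⟩

/-- MAD(μ) is closed under singular suprema: if lam = sup_{i<θ} lam_i with θ < lam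
and each lam_i ∈ MAD(μ), then lam ∈ MAD(μ). -/
theorem stmt3 (μ : Cardinal.{u}) (hμ : ℵ₀ ≤ μ) {ι : Type u} (lam : Cardinal.{u})
    (lams : ι → Cardinal.{u}) (hθ : #ι < lam) (hmem : ∀ i, lams i ∈ MADSet μ)
    (hsup : lam = ⨆ i, lams i) : lam ∈ MADSet μ := by
  have hle : ∀ i, lams i ≤ lam := fun i =>
    hsup ▸ le_ciSup (Cardinal.bddAbove_range lams) i
  obtain ⟨i₀, hi₀⟩ := exists_lt_of_lt_ciSup' (hsup ▸ hθ)
  obtain ⟨ℬ, hℬ, hcof, hcard⟩ := hmem i₀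
  have hcofω : ℵ₀ ≤ μ.ord.cof := by
    rw [Ordinal.aleph0_le_cof]
    exact Cardinal.isSuccLimit_ord hμ
  have hω : ℵ₀ ≤ lam := hcofω.trans (hcof.trans (hcard.le.trans (hle i₀)))
  obtain ⟨f⟩ : Nonempty (ι ↪ ℬ) := by
    rw [← Cardinal.le_def, hcard]
    exact hi₀.le
  have hD : ∀ B : ℬ, ∃ 𝒟 : Set (Set μ.out), IsMadFamily μ 𝒟 ∧ ⋃₀ 𝒟 = B ∧ #𝒟 ≤ lam ∧
      ∀ i, f i = B → #𝒟 = lams i := by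
    intro B
    have hB : #B.1 = μ := hℬ.1.2.1 B B.2
    by_cases hf : ∃ i, f i = B
    · obtain ⟨i, rfl⟩ := hf
      obtain ⟨𝒟, h1, h2, h3⟩ := exists_mad_sUnion_eq hμ (hmem i) _ hB
      exact ⟨𝒟, h1, h2, h3.trans_le (hle i), fun j hj => by rw [f.injective hj, h3]⟩
    · refine ⟨{B.1}, mad_singleton hB, Set.sUnion_singleton _, ?_, fun i hi => absurd ⟨i, hi⟩ hf⟩
      rw [Cardinal.mk_singleton]
      exact Cardinal.one_le_aleph0.trans hω
  choose D hDmad hDU hDle hDeq using hD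
  have hlow : ∀ i, lams i ≤ #(⋃ B, D B) := fun i =>
    (hDeq (f i) i rfl).symm.le.trans (Cardinal.mk_le_mk_of_subset (Set.subset_iUnion D (f i)))
  refine ⟨⋃ B, D B, mad_biUnion hℬ D hDmad hDU, (hcof.trans hcard.le).trans (hlow i₀),
    le_antisymm ?_ ?_⟩
  · calc #(⋃ B, D B) ≤ #ℬ * ⨆ B, #(D B) := Cardinal.mk_iUnion_le _
      _ ≤ lam * lam := mul_le_mul' (hcard.le.trans (hle i₀)) (ciSup_le' hDle)
      _ = lam := Cardinal.mul_eq_self hω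
  · rw [hsup]
    exact ciSup_le' hlow
end

section
/- Let μ be a singular cardinal of countable cofinality with μ < 𝔟 (the bounding number of (ω^ω, ≤*)). Then μ ∉ MAD(μ). (In particular, Martin's Axiom together with 2^{ℵ₀} > μ implies μ ∉ MAD(μ).) -/
/-!
Let `𝒜` be a `μ`-almost disjoint family of size `μ`. Since `cf μ = ω`, write `𝒜` as an increasing
union of sets `S n` of size `< μ` (`exists_filtration`); then the cardinals
`c n = max ℵ₀ #(S n)` are increasing and cofinal in `μ`. Fix distinct members `a 0, a 1, …` of `𝒜`,
and for `A ∈ 𝒜` let `f A n` be the least `k` with `#(A ∩ a n) ≤ c k`. As `#𝒜 = μ < 𝔟`, a single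
`g : ℕ → ℕ` eventually dominates every `f A`.

For each `n`, the union of the sets `A ∩ a n` over those `A ∈ S n` with `#(A ∩ a n) ≤ c (g n)` has
size at most `c n * c (g n) < μ`, so `a n` contains a set `C n` of size `c n` disjoint from it. Any
given `A ∈ 𝒜` lies in `S n`, differs from `a n` and satisfies `f A n ≤ g n` for almost all `n`,
so it meets only finitely many `C n`, and hence `⋃ n, C n` in a set of size `< μ`. Since
`⋃ n, C n` has size `μ`, it witnesses that `𝒜` is not maximal.
-/

universe u
open Cardinal

/-- The bounding number 𝔟 of (ω^ω, ≤*). -/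
noncomputable def bOmega : Cardinal.{0} :=
  sInf {c | ∃ F : Set (ℕ → ℕ), #F = c ∧ ¬∃ g : ℕ → ℕ, ∀ f ∈ F, {n | g n < f n}.Finite}

/-- An uncountable type whose cardinality has cofinality `ω` is an increasing union of countably many
sets of strictly smaller cardinality. -/
lemma exists_filtration {T : Type} (μ : Cardinal.{0}) (hμ : ℵ₀ < μ)
    (hcof : μ.ord.cof = ℵ₀) (hT : #T = μ) :
    ∃ S : ℕ → Set T, Monotone S ∧ (∀ x, ∃ n, x ∈ S n) ∧ ∀ n, #(S n) < μ := by
  obtain ⟨s, hs, hsc⟩ := Order.exists_cof_eq μ.ord.ToType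
  rw [Ordinal.cof_toType, hcof] at hsc
  obtain ⟨e⟩ : Nonempty (ℕ ≃ s) := Cardinal.eq.1 (by rw [hsc, mk_nat])
  obtain ⟨φ⟩ : Nonempty (T ≃ μ.ord.ToType) := Cardinal.eq.1 (by rw [hT, mk_ord_toType])
  let p := partialSups (fun n => (e n : μ.ord.ToType))
  refine ⟨fun n => φ ⁻¹' Set.Iic (p n), ?_, ?_, ?_⟩
  · intro m n h
    exact Set.preimage_mono (Set.Iic_subset_Iic.2 (p.monotone h))
  · intro x
    obtain ⟨y, hy, hxy⟩ := hs (φ x)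
    refine ⟨e.symm ⟨y, hy⟩, hxy.trans ?_⟩
    have := le_partialSups (fun n => (e n : μ.ord.ToType)) (e.symm ⟨y, hy⟩)
    simpa using this
  · intro n
    refine (mk_preimage_equiv φ _).trans_lt ?_
    have h1 : Set.Iic (p n) = insert (p n) (Set.Iio (p n)) := Set.Iio_insert.symm
    rw [h1]
    exact mk_insert_le.trans_lt (add_lt_of_lt hμ.le (mk_Iio_toType_ord_lt _)
      (one_lt_aleph0.trans hμ))

lemma mk_iUnion_nat_le {α : Type} (s : ℕ → Set α) (κ : Cardinal.{0}) (h : ∀ n, #(s n) ≤ κ) :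
    #(⋃ n, s n) ≤ ℵ₀ * κ := by
  refine (mk_iUnion_le s).trans ?_
  rw [mk_nat]
  exact mul_le_mul_right (ciSup_le' h) _

/-- Fewer than `𝔟` functions are eventually dominated by a single one. -/
lemma exists_bound {ι : Type} (h : #ι < bOmega) (f : ι → ℕ → ℕ) :
    ∃ g : ℕ → ℕ, ∀ i, ∃ N, ∀ n ≥ N, f i n ≤ g n := by
  have h1 := notMem_of_lt_csInf' (mk_range_le.trans_lt h : #(Set.range f) < bOmega)
  simp only [Set.mem_ofPred_eq, not_exists, not_and] at h1
  have h2 := h1 (Set.range f) rfl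
  push Not at h2
  obtain ⟨g, hg⟩ := h2
  refine ⟨g, fun i => ?_⟩
  obtain ⟨N, hN⟩ := (hg _ ⟨i, rfl⟩).bddAbove
  refine ⟨N + 1, fun n hn => ?_⟩
  by_contra hlt
  have := hN (show n ∈ {n | g n < f i n} from not_le.1 hlt)
  omega

/-- If μ is singular of countable cofinality and μ < 𝔟, then μ ∉ MAD(μ). -/
theorem stmt9 (μ : Cardinal.{0}) (hμ : ℵ₀ < μ) (hcof : μ.ord.cof = ℵ₀)
    (hb : μ < bOmega) : μ ∉ MADSet μ := by
  rintro ⟨𝒜, ⟨⟨hU, hA, hAD⟩, hmax⟩, -, hcard⟩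
  obtain ⟨S, hSmono, hScov, hSlt⟩ := exists_filtration μ hμ hcof hcard
  let c : ℕ → Cardinal.{0} := fun n => max ℵ₀ #(S n)
  have hcμ : ∀ n, c n < μ := fun n => max_lt hμ (hSlt n)
  have hcmono : Monotone c := fun m n h => max_le_max le_rfl (mk_le_mk_of_subset (hSmono h))
  have hccof : ∀ x < μ, ∃ n, x < c n := by
    intro x hx
    by_contra! hcon
    have h1 : #(⋃ n, S n) ≤ ℵ₀ * x :=
      mk_iUnion_nat_le S x fun n => (le_max_right _ _).trans (hcon n)
    rw [Set.iUnion_eq_univ_iff.2 hScov, mk_univ, hcard] at h1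
    exact absurd (h1.trans_lt (mul_lt_of_lt hμ.le hμ hx)) (lt_irrefl _)
  have hinf : Infinite 𝒜 := by
    rw [Cardinal.infinite_iff, hcard]
    exact hμ.le
  let a : ℕ ↪ 𝒜 := Infinite.natEmbedding 𝒜
  -- If `A = a n`, the set is empty and `f A n = 0`; this happens for at most one `n`.
  let f : 𝒜 → ℕ → ℕ := fun A n => sInf {k | #(↥(A.1 ∩ (a n).1)) ≤ c k}
  have hf : ∀ A n, A ≠ a n → #(↥(A.1 ∩ (a n).1)) ≤ c (f A n) := by
    intro A n hne
    obtain ⟨k, hk⟩ := hccof _ (hAD A.1 A.2 (a n).1 (a n).2 fun h => hne (Subtype.ext h))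
    exact Nat.sInf_mem (s := {k | #(↥(A.1 ∩ (a n).1)) ≤ c k}) ⟨k, hk.le⟩
  obtain ⟨g, hg⟩ := exists_bound (hcard.trans_lt hb) f
  let I : ℕ → Set 𝒜 := fun n => {A | A ∈ S n ∧ #(↥(A.1 ∩ (a n).1)) ≤ c (g n)}
  let R : ℕ → Set μ.out := fun n => ⋃ A ∈ I n, A.1 ∩ (a n).1
  have hR : ∀ n, #(R n) < μ := by
    intro n
    refine (mk_biUnion_le _ _).trans_lt (mul_lt_of_lt hμ.le ?_ ?_)
    · exact (mk_le_mk_of_subset fun A hA => hA.1).trans_lt (hSlt n)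
    · exact (ciSup_le' fun A : I n => A.2.2).trans_lt (hcμ (g n))
  have hC : ∀ n, ∃ C ⊆ (a n).1 \ R n, #C = c n := by
    intro n
    rw [← le_mk_iff_exists_subset]
    by_contra! hlt
    have h1 : #((a n).1) ≤ #(↥((a n).1 \ R n)) + #(R n) := by
      refine (mk_le_mk_of_subset ?_).trans (mk_union_le _ _)
      rw [Set.sdiff_union_self]
      exact Set.subset_union_left
    rw [hA _ (a n).2] at h1
    exact absurd (h1.trans_lt (add_lt_of_lt hμ.le (hlt.trans (hcμ n)) (hR n))) (lt_irrefl _)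
  choose C hCsub hCcard using hC
  have hCU : ⋃ n, C n ⊆ ⋃₀ 𝒜 := Set.iUnion_subset fun n x hx => ⟨_, (a n).2, (hCsub n hx).1⟩
  have hCμ : #(⋃ n, C n) = μ := by
    refine le_antisymm ((mk_le_mk_of_subset hCU).trans hU.le) ?_
    by_contra! hlt
    obtain ⟨n, hn⟩ := hccof _ hlt
    rw [← hCcard n] at hn
    exact absurd (hn.trans_le (mk_le_mk_of_subset (Set.subset_iUnion C n))) (lt_irrefl _)
  have hCA : ∀ A ∈ 𝒜, #(↥(A ∩ ⋃ n, C n)) < μ := by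
    intro A hA'
    obtain ⟨N₁, hN₁⟩ := hg ⟨A, hA'⟩
    obtain ⟨N₂, hN₂⟩ := hScov ⟨A, hA'⟩
    obtain ⟨N₃, hN₃⟩ : ∃ N, ∀ n ≥ N, (⟨A, hA'⟩ : 𝒜) ≠ a n := by
      by_cases h : ∃ m, (⟨A, hA'⟩ : 𝒜) = a m
      · obtain ⟨m, hm⟩ := h
        refine ⟨m + 1, fun n hn h => ?_⟩
        have := a.injective (hm.symm.trans h)
        omega
      · exact ⟨0, fun n _ h' => h ⟨n, h'⟩⟩
    let N := max N₁ (max N₂ N₃)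
    -- `A` misses `C n` for all `n ≥ N`.
    have hsub : A ∩ ⋃ n, C n ⊆ ⋃ n, (if n < N then C n else ∅) := by
      rintro x ⟨hxA, hx⟩
      obtain ⟨n, hn⟩ := Set.mem_iUnion.1 hx
      refine Set.mem_iUnion.2 ⟨n, ?_⟩
      by_cases hnN : n < N
      · rwa [if_pos hnN]
      · exfalso
        have h1 : N₁ ≤ n := by omega
        have h2 : N₂ ≤ n := by omega
        have h3 : N₃ ≤ n := by omega
        refine (hCsub n hn).2 (Set.mem_biUnion (x := ⟨A, hA'⟩) ⟨hSmono h2 hN₂, ?_⟩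
          ⟨hxA, (hCsub n hn).1⟩)
        exact (hf _ n (hN₃ n h3)).trans (hcmono (hN₁ n h1))
    refine (mk_le_mk_of_subset hsub).trans_lt
      ((mk_iUnion_nat_le _ (c N) fun n => ?_).trans_lt (mul_lt_of_lt hμ.le hμ (hcμ N)))
    split_ifs with h
    · rw [hCcard]
      exact hcmono h.le
    · simp
  refine hmax ⟨⋃ n, C n, hCU, fun hmem => ?_, ?_, ?_, ?_⟩
  · have := hCA _ hmem
    rw [Set.inter_self, hCμ] at this
    exact lt_irrefl _ this
  · rw [Set.sUnion_insert, Set.union_eq_self_of_subset_left hCU, hU]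
  · rintro A (rfl | hA')
    exacts [hCμ, hA A hA']
  · rintro A (rfl | hA') B (rfl | hB') hne
    · exact absurd rfl hne
    · rw [Set.inter_comm]
      exact hCA B hB'
    · exact hCA A hA'
    · exact hAD A hA' B hB' hne
end

section
/- Let μ be a singular cardinal. Then for every regular cardinal λ with 𝔞_μ ≤ λ < μ, it holds that λ ∈ MAD(μ). -/
/-!
Write `κ = cf μ` and fix a nontrivial `μ`-mad family `𝒜` of size at most `lam`
(Zorn's lemma shows that `MADSet μ` is nonempty, so that its infimum is attained). Split the underlying set into `lam` pieces `X i` of size `μ`, indexed by a well-order `I`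
with a greatest element. The new mad family consists of all the `X i` and, for each `δ : I` with
a cofinal map `κ → δ`, of at most `#𝒜` sets living on `⋃ i < δ, X i` and meeting each `⋃ i ≤ i₀, X i`,
`i₀ < δ`, in fewer than `μ` points.

The sets at `δ` are copies of members of `𝒜`. Choose distinct `a j ∈ 𝒜` for `j < κ`. Each
`a j \ ⋃ i < j, a i` still has size `μ`, so a cofinal map `κ → δ`, which cuts
`⋃ i < δ, X i` into blocks indexed by `κ`, yields an injection `φ` of this set sending the `j`-th block into
`a j \ ⋃ i < j, a i` (`exists_transversal`). The sets at `δ` are the preimages under `φ` of the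
members of `𝒜` other than the `a j`, as far as these preimages have size `μ`.

For maximality, let `C` have size `μ` and meet every `X i` in fewer than `μ` points. Let `δ` be
least such that `C` has `μ` points below `δ`. The sizes of `C` below `i`, for `i < δ`, are
unbounded in `μ`, because there are fewer than `μ` pieces; hence there is a cofinal map `κ → δ`. By maximality of `𝒜`,
the `φ`-image of `C` meets some `A ∈ 𝒜` in `μ` points, and `A` is not an `a j`, because only the
first `j + 1` blocks are mapped to points of `a j`.
-/

universe u
open Cardinal

open Set

/-- Fewer than `cf μ` sets of size less than `μ` have a union of size less than `μ`. -/
theorem mk_biUnion_lt {μ : Cardinal.{u}} (hμ : ℵ₀ ≤ μ) {K M : Type u} (S : Set K)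
    (hS : #S < μ.ord.cof) (T : K → Set M) (hT : ∀ j ∈ S, #(T j) < μ) :
    #(⋃ j ∈ S, T j : Set M) < μ := by
  refine (mk_biUnion_le T S).trans_lt (mul_lt_of_lt hμ (hS.trans_le (Ordinal.cof_ord_le μ)) ?_)
  exact iSup_lt_of_lt_cof_ord hS fun j => hT j.1 j.2

theorem IsMadFamily.exists_inter {μ : Cardinal.{u}} {α : Type u} {𝒜 : Set (Set α)}
    (h : IsMadFamily μ 𝒜) {C : Set α} (hC : C ⊆ ⋃₀ 𝒜) (hCμ : #C = μ) :
    ∃ A ∈ 𝒜, μ ≤ #(A ∩ C : Set α) := by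
  by_contra! hcon
  have hCA : C ∉ 𝒜 := fun hmem => by
    have := hcon C hmem
    rw [inter_self, hCμ] at this
    exact this.false
  refine h.2 ⟨C, hC, hCA, ?_, ?_, ?_⟩
  · rw [sUnion_insert, union_eq_self_of_subset_left hC]
    exact h.1.1
  · rintro A (rfl | hA)
    · exact hCμ
    · exact h.1.2.1 A hA
  · rintro A (rfl | hA) B (rfl | hB) hAB
    · exact absurd rfl hAB
    · rw [inter_comm]
      exact hcon B hB
    · exact hcon A hA
    · exact h.1.2.2 A hA B hB hAB

/-- A converse of `IsMadFamily.exists_inter`, with `C` ranging over all sets of size `μ`. -/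
theorem isMadFamily_of_exists_inter {μ : Cardinal.{u}} {α : Type u} {𝒜 : Set (Set α)}
    (h : IsADFamily μ 𝒜) (hmax : ∀ C : Set α, #C = μ → ∃ A ∈ 𝒜, μ ≤ #(A ∩ C : Set α)) :
    IsMadFamily μ 𝒜 := by
  refine ⟨h, ?_⟩
  rintro ⟨C, -, hC, hins⟩
  obtain ⟨A, hA, hAC⟩ := hmax C (hins.2.1 C (mem_insert _ _))
  refine (hins.2.2 A (mem_insert_of_mem _ hA) C (mem_insert _ _) ?_).not_ge hAC
  rintro rfl
  exact hC hA

theorem exists_fibres {μ : Cardinal.{u}} (hμ : ℵ₀ ≤ μ) (I : Type u) [Nonempty I] (hI : #I ≤ μ) :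
    ∃ h : μ.out → I, ∀ i, #(h ⁻¹' {i}) = μ := by
  have hcard : #μ.out = #(I × μ.out) := by
    rw [mk_prod, lift_id, lift_id, mk_out]
    exact (mul_eq_right hμ hI (mk_ne_zero I)).symm
  obtain ⟨τ⟩ := Cardinal.eq.1 hcard
  refine ⟨fun x => (τ x).1, fun i => ?_⟩
  have : #(Prod.fst ⁻¹' {i} : Set (I × μ.out)) = μ := by
    refine Eq.trans (mk_congr (β := μ.out) ⟨fun x => x.1.2, fun x => ⟨(i, x), rfl⟩, ?_, fun x => rfl⟩) (mk_out μ)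
    rintro ⟨⟨i', x⟩, rfl⟩
    rfl
  exact (mk_preimage_equiv τ (Prod.fst ⁻¹' {i})).trans this

theorem MADSet_nonempty {μ : Cardinal.{u}} (hμ : ℵ₀ ≤ μ) : (MADSet μ).Nonempty := by
  have hκ : μ.ord.cof ≠ 0 := by
    rw [ne_eq, Ordinal.cof_eq_zero, ord_eq_zero]
    exact (aleph0_pos.trans_le hμ).ne'
  have : Nonempty μ.ord.cof.out := by
    rw [← mk_ne_zero_iff, mk_out]
    exact hκ
  obtain ⟨h, hh⟩ := exists_fibres hμ μ.ord.cof.out (by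
    rw [mk_out]
    exact Ordinal.cof_ord_le μ)
  let X : μ.ord.cof.out → Set μ.out := fun i => h ⁻¹' {i}
  have hne : ∀ i, (X i).Nonempty := fun i => by
    rw [← nonempty_coe_sort, ← mk_ne_zero_iff, hh i]
    exact (aleph0_pos.trans_le hμ).ne'
  have hXinj : Function.Injective X := by
    intro i i' hii
    obtain ⟨x, hx⟩ := hne i
    have hx' : x ∈ X i' := hii ▸ hx
    exact hx.symm.trans hx'
  have hAD : IsADFamily μ (range X) := by
    refine ⟨?_, ?_, ?_⟩
    · have : ⋃₀ range X = Set.univ := eq_univ_of_forall fun x => ⟨X (h x), mem_range_self _, rfl⟩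
      rw [this, mk_univ, mk_out]
    · rintro _ ⟨i, rfl⟩
      exact hh i
    · rintro _ ⟨i, rfl⟩ _ ⟨i', rfl⟩ hii
      have : X i ∩ X i' = ∅ := by
        refine eq_empty_of_forall_notMem ?_
        rintro x ⟨rfl, rfl⟩
        exact hii rfl
      rw [this, mk_eq_zero]
      exact aleph0_pos.trans_le hμ
  obtain ⟨𝒜, hsub, hmax⟩ := zorn_subset_nonempty {𝒜 : Set (Set μ.out) | IsADFamily μ 𝒜}
    (by
      intro c hc hchain hcne
      refine ⟨⋃₀ c, ⟨?_, ?_, ?_⟩, fun s hs => subset_sUnion_of_mem hs⟩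
      · refine le_antisymm ((mk_set_le _).trans (mk_out μ).le) ?_
        obtain ⟨s, hs⟩ := hcne
        refine (hc hs).1.ge.trans ?_
        exact mk_le_mk_of_subset (sUnion_subset_sUnion (subset_sUnion_of_mem hs))
      · rintro A ⟨s, hs, hA⟩
        exact (hc hs).2.1 A hA
      · rintro A ⟨s, hs, hA⟩ B ⟨t, ht, hB⟩ hAB
        rcases hchain.total hs ht with hst | hst
        · exact (hc ht).2.2 A (hst hA) B hB hAB
        · exact (hc hs).2.2 A hA B (hst hB) hAB) (range X) hAD
  refine ⟨#𝒜, 𝒜, ⟨hmax.prop, ?_⟩, ?_, rfl⟩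
  · rintro ⟨C, -, hC, hins⟩
    exact hC (hmax.le_of_ge hins (subset_insert C 𝒜) (mem_insert C 𝒜))
  · calc μ.ord.cof = #(range X) := by rw [mk_range_eq X hXinj, mk_out]
      _ ≤ #𝒜 := mk_le_mk_of_subset hsub

theorem mk_Iio_ordToType_lt {c : Cardinal.{u}} (j : c.ord.ToType) : #(Iio j) < c := by
  simpa using mk_Iio_lt j (by simp)

theorem exists_cofinal_cardinals (μ : Cardinal.{u}) {K : Type u} (hK : #K = μ.ord.cof) :
    ∃ m : K → Cardinal.{u}, (∀ j, m j < μ) ∧ ∀ θ < μ, ∃ j, θ ≤ m j := by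
  obtain ⟨s, hs, hcard⟩ := Order.exists_cof_eq μ.ord.ToType
  rw [Ordinal.cof_toType, ← hK] at hcard
  obtain ⟨τ⟩ := Cardinal.eq.1 hcard
  refine ⟨fun j => #(Iio (τ.symm j).1), fun j => mk_Iio_ordToType_lt _, fun θ hθ => ?_⟩
  let t : μ.ord.ToType := Ordinal.enum (α := μ.ord.ToType) (· < ·)
    ⟨θ.ord, by simpa using hθ⟩
  obtain ⟨x, hx, htx⟩ := hs t
  refine ⟨τ ⟨x, hx⟩, ?_⟩
  have ht : #(Iio t) = θ := by
    change (Ordinal.typein (α := μ.ord.ToType) (· < ·) t).card = θ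
    exact (congrArg Ordinal.card (Ordinal.typein_enum _ _)).trans (card_ord θ)
  rw [← ht]
  simpa using mk_le_mk_of_subset (Iio_subset_Iio htx)

/-- A `κ`-sequence of distinct members `a j` of `𝒜`, together with injections of the whole type
into the pairwise disjoint sets `a j \ ⋃ i < j, a i`. -/
theorem exists_transversal {μ : Cardinal.{u}} (hμ : ℵ₀ ≤ μ) {K : Type u} [LinearOrder K]
    (hK : #K = μ.ord.cof) (hKI : ∀ j : K, #(Iic j) < μ.ord.cof) {𝒜 : Set (Set μ.out)}
    (h𝒜 : IsADFamily μ 𝒜) (hcof : μ.ord.cof ≤ #𝒜) :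
    ∃ (a : K → Set μ.out) (e : K → μ.out → μ.out), (∀ j, a j ∈ 𝒜) ∧
      (∀ j, Function.Injective (e j)) ∧ (∀ j x, e j x ∈ a j) ∧
      ∀ i j, i < j → ∀ x, e j x ∉ a i := by
  rw [← hK] at hcof
  obtain ⟨b⟩ := hcof
  have key : ∀ j, μ ≤ #((b j).1 \ ⋃ i ∈ Iio j, ((b j).1 ∩ (b i).1) : Set μ.out) := by
    intro j
    by_contra! hlt
    have hsmall : #(⋃ i ∈ Iio j, ((b j).1 ∩ (b i).1) : Set μ.out) < μ := by
      refine mk_biUnion_lt hμ _ ((mk_le_mk_of_subset Iio_subset_Iic_self).trans_lt (hKI j)) _ ?_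
      intro i hi
      refine h𝒜.2.2 _ (b j).2 _ (b i).2 fun hji => ?_
      exact (ne_of_gt hi) (b.injective (Subtype.ext hji))
    have := (le_mk_sdiff_add_mk (b j).1 (⋃ i ∈ Iio j, ((b j).1 ∩ (b i).1))).trans_lt
      (add_lt_of_lt hμ hlt hsmall)
    rw [h𝒜.2.1 _ (b j).2] at this
    exact this.false
  have hemb : ∀ j, Nonempty (μ.out ↪ ((b j).1 \ ⋃ i ∈ Iio j, ((b j).1 ∩ (b i).1) : Set μ.out)) :=
    fun j => (mk_out μ).le.trans (key j)
  let e := fun j => (hemb j).some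
  refine ⟨fun j => (b j).1, fun j x => (e j x).1, fun j => (b j).2, fun j x y hxy => ?_,
    fun j x => (e j x).2.1, fun i j hij x hx => ?_⟩
  · exact (e j).injective (Subtype.ext hxy)
  · exact (e j x).2.2 (mem_biUnion (mem_Iio.2 hij) ⟨(e j x).2.1, hx⟩)

/-- If `C` has `μ` points, but fewer than `μ` in each of fewer than `μ` well-ordered pieces, then
for some `δ` with a cofinal map `f : K → δ`, the set `C` has `μ` points below `δ` but fewer
than `μ` points up to any `i < δ`. -/
theorem exists_critical {μ : Cardinal.{u}} (hμ : ℵ₀ ≤ μ) {K I M : Type u}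
    (hK : #K = μ.ord.cof) [LinearOrder I] [WellFoundedLT I] [OrderTop I] (hI : #I < μ)
    (h : M → I) {C : Set M} (hC : #C = μ) (hX : ∀ i, #(C ∩ h ⁻¹' {i} : Set M) < μ) :
    ∃ (δ : I) (f : K → I), (∀ j, f j < δ) ∧ (∀ i < δ, ∃ j, i ≤ f j) ∧
      #(C ∩ h ⁻¹' Iio δ : Set M) = μ ∧ ∀ i < δ, #(C ∩ h ⁻¹' Iic i : Set M) < μ := by
  have hsplit : ∀ i, #(C ∩ h ⁻¹' Iic i : Set M) ≤
      #(C ∩ h ⁻¹' Iio i : Set M) + #(C ∩ h ⁻¹' {i} : Set M) := fun i => by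
    rw [← Iio_union_right, preimage_union, inter_union_distrib_left]
    exact mk_union_le _ _
  have hex : {i : I | μ ≤ #(C ∩ h ⁻¹' Iio i : Set M)}.Nonempty := by
    refine ⟨⊤, ?_⟩
    by_contra hlt
    have := (hsplit ⊤).trans_lt (add_lt_of_lt hμ (not_le.1 hlt) (hX ⊤))
    rw [Iic_top, preimage_univ, inter_univ, hC] at this
    exact this.false
  obtain ⟨δ, hδ, hmin⟩ := WellFounded.has_min (wellFounded_lt (α := I)) _ hex
  have hδ' : #(C ∩ h ⁻¹' Iio δ : Set M) = μ :=
    le_antisymm ((mk_le_mk_of_subset inter_subset_left).trans hC.le) hδ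
  have hbelow : ∀ i < δ, #(C ∩ h ⁻¹' Iic i : Set M) < μ := fun i hi =>
    (hsplit i).trans_lt (add_lt_of_lt hμ (not_le.1 fun hle => hmin i hle hi) (hX i))
  have hunb : ∀ θ < μ, ∃ i < δ, θ < #(C ∩ h ⁻¹' Iic i : Set M) := by
    intro θ hθ
    by_contra! hcon
    have hcover : C ∩ h ⁻¹' Iio δ ⊆ ⋃ i ∈ Iio δ, C ∩ h ⁻¹' Iic i := fun x hx =>
      mem_biUnion hx.2 ⟨hx.1, le_rfl⟩
    have h1 := (mk_le_mk_of_subset hcover).trans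
      (mk_biUnion_le (fun i => C ∩ h ⁻¹' Iic i) (Iio δ))
    have h2 : (⨆ i : Iio δ, #(C ∩ h ⁻¹' Iic i.1 : Set M)) ≤ θ := ciSup_le' fun i => hcon i.1 i.2
    have h3 := h1.trans_lt (mul_lt_of_lt hμ ((mk_set_le _).trans_lt hI) (h2.trans_lt hθ))
    rw [hδ'] at h3
    exact h3.false
  obtain ⟨m, hm, hmcof⟩ := exists_cofinal_cardinals μ hK
  choose f hfδ hf using fun j => hunb (m j) (hm j)
  refine ⟨δ, f, hfδ, fun i hi => ?_, hδ', hbelow⟩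
  obtain ⟨j, hj⟩ := hmcof _ (hbelow i hi)
  refine ⟨j, le_of_lt (not_le.1 fun hle => ?_)⟩
  refine (hj.trans_lt (hf j)).not_ge (mk_le_mk_of_subset ?_)
  exact inter_subset_inter_right _ (preimage_mono (Iic_subset_Iic.2 hle))

/-- For a singular μ and every regular lam with 𝔞_μ ≤ lam < μ, lam ∈ MAD(μ). -/
theorem stmt12 (μ : Cardinal.{u}) (hμ : ℵ₀ ≤ μ) (hsing : μ.ord.cof < μ)
    (lam : Cardinal.{u}) (hreg : lam.IsRegular) (h1 : sInf (MADSet μ) ≤ lam)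
    (h2 : lam < μ) : lam ∈ MADSet μ := by
  obtain ⟨𝒜, hmad, hcof, hcard⟩ := csInf_mem (MADSet_nonempty hμ)
  rw [← hcard] at h1
  have hμ0 : 0 < μ := aleph0_pos.trans_le hμ
  have hlam : ℵ₀ ≤ lam := hreg.aleph0_le
  have hκ : ℵ₀ ≤ μ.ord.cof :=
    Ordinal.aleph0_le_cof_iff.2 (Ordinal.one_lt_cof_iff.2 (isSuccLimit_ord hμ))
  let K := μ.ord.cof.ord.ToType
  have hK : #K = μ.ord.cof := mk_ord_toType _
  have hKne : Nonempty K := by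
    rw [← mk_ne_zero_iff, hK]
    exact (aleph0_pos.trans_le hκ).ne'
  have hKI : ∀ j : K, #(Iic j) < μ.ord.cof := fun j => by
    rw [← Iio_union_right]
    refine (mk_union_le _ _).trans_lt (add_lt_of_lt hκ (mk_Iio_ordToType_lt j) ?_)
    rw [mk_singleton]
    exact one_lt_aleph0.trans_le hκ
  let I := WithTop lam.ord.ToType
  have hI : #I = lam := by
    rw [show #I = #lam.ord.ToType + 1 from mk_option, mk_ord_toType, add_one_eq hlam]
  obtain ⟨h, hh⟩ := exists_fibres hμ I (hI.le.trans h2.le)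
  obtain ⟨a, e, ha, hinj, hmem, hnot⟩ := exists_transversal hμ hK hKI hmad.1 hcof
  -- `Good δ f` says that `f` is cofinal in `δ`.
  let Good : I → (K → I) → Prop := fun δ f => (∀ j, f j < δ) ∧ ∀ i < δ, ∃ j, i ≤ f j
  -- `F δ` is the map chosen for `δ`, junk if none is cofinal.
  let F : I → K → I := fun δ => Classical.epsilon (Good δ)
  have hF : ∀ δ f, Good δ f → Good δ (F δ) := fun δ f hf => Classical.epsilon_spec ⟨f, hf⟩
  -- The block of `x` below `δ` is the least `j` with `h x ≤ F δ j`, junk unless `h x < δ`.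
  have hp : ∀ δ x, ∃ j, Good δ (F δ) → h x < δ →
      h x ≤ F δ j ∧ ∀ j', h x ≤ F δ j' → j ≤ j' := by
    intro δ x
    by_cases hg : Good δ (F δ) ∧ h x < δ
    · obtain ⟨j, hj, hmin⟩ :=
        WellFounded.has_min (wellFounded_lt (α := K)) {j | h x ≤ F δ j} (hg.1.2 _ hg.2)
      exact ⟨j, fun _ _ => ⟨hj, fun j' hj' => not_lt.1 (hmin j' hj')⟩⟩
    · exact ⟨hKne.some, fun h1 h2 => absurd ⟨h1, h2⟩ hg⟩
  choose p hp using hp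
  let φ : I → μ.out → μ.out := fun δ x => e (p δ x) x
  have hφ : ∀ δ, Function.Injective (φ δ) := by
    intro δ x y hxy
    have hxy' : e (p δ x) x = e (p δ y) y := hxy
    rcases lt_trichotomy (p δ x) (p δ y) with hlt | heq | hlt
    · exact absurd (hxy' ▸ hmem _ x) (hnot _ _ hlt y)
    · rw [heq] at hxy'
      exact hinj _ hxy'
    · exact absurd (hxy'.symm ▸ hmem _ y) (hnot _ _ hlt x)
  let X : I → Set μ.out := fun i => h ⁻¹' {i}
  let B : I → Set μ.out → Set μ.out := fun δ A => {x | h x < δ ∧ φ δ x ∈ A}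
  let 𝓑 : Set (Set μ.out) :=
    {S | ∃ δ A, Good δ (F δ) ∧ A ∈ 𝒜 ∧ A ∉ range a ∧ S = B δ A ∧ #S = μ}
  have hsmall : ∀ δ A, Good δ (F δ) → A ∈ 𝒜 → A ∉ range a → ∀ i < δ,
      #(B δ A ∩ h ⁻¹' Iic i : Set μ.out) < μ := by
    intro δ A hg hA hAa i hi
    obtain ⟨j, hj⟩ := hg.2 i hi
    refine (mk_le_mk_of_subset ?_).trans_lt
      (mk_biUnion_lt hμ (Iic j) (hKI j) (fun j' => φ δ ⁻¹' (A ∩ a j')) ?_)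
    · rintro x ⟨⟨hxδ, hxA⟩, hxi⟩
      exact mem_biUnion ((hp δ x hg hxδ).2 j (le_trans hxi hj)) ⟨hxA, hmem _ x⟩
    · intro j' _
      refine (mk_preimage_of_injective _ _ (hφ δ)).trans_lt ?_
      refine hmad.1.2.2 A hA _ (ha j') ?_
      rintro rfl
      exact hAa (mem_range_self j')
  have hXB : ∀ i, ∀ S ∈ 𝓑, #(X i ∩ S : Set μ.out) < μ := by
    rintro i S ⟨δ, A, hg, hA, hAa, rfl, -⟩
    rcases lt_or_ge i δ with hi | hi
    · refine (mk_le_mk_of_subset ?_).trans_lt (hsmall δ A hg hA hAa i hi)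
      rintro x ⟨rfl, hx⟩
      exact ⟨hx, le_refl (h x)⟩
    · have : X i ∩ B δ A = ∅ := by
        refine eq_empty_of_forall_notMem ?_
        rintro x ⟨rfl, hx⟩
        exact hx.1.not_ge hi
      rw [this, mk_eq_zero]
      exact hμ0
  have hBB : ∀ δ δ' A A', δ < δ' → Good δ' (F δ') → A' ∈ 𝒜 → A' ∉ range a →
      #(B δ A ∩ B δ' A' : Set μ.out) < μ := by
    intro δ δ' A A' hδ hg hA hAa
    refine (mk_le_mk_of_subset ?_).trans_lt (hsmall δ' A' hg hA hAa δ hδ)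
    exact fun x hx => ⟨hx.2, hx.1.1.le⟩
  have hXinj : Function.Injective X := by
    intro i i' hii
    have hne : (X i).Nonempty := by
      rw [← nonempty_coe_sort, ← mk_ne_zero_iff, hh i]
      exact hμ0.ne'
    obtain ⟨x, hx⟩ := hne
    have hx' : x ∈ X i' := hii ▸ hx
    exact hx.symm.trans hx'
  have hAD : IsADFamily μ (range X ∪ 𝓑) := by
    refine ⟨?_, ?_, ?_⟩
    · have : ⋃₀ (range X ∪ 𝓑) = Set.univ :=
        eq_univ_of_forall fun x => ⟨X (h x), Or.inl (mem_range_self _), rfl⟩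
      rw [this, mk_univ, mk_out]
    · rintro S (⟨i, rfl⟩ | ⟨δ, A, -, -, -, -, hS⟩)
      · exact hh i
      · exact hS
    · rintro S (⟨i, rfl⟩ | hS) T (⟨i', rfl⟩ | hT) hST
      · have : X i ∩ X i' = ∅ := by
          refine eq_empty_of_forall_notMem ?_
          rintro x ⟨rfl, rfl⟩
          exact hST rfl
        rw [this, mk_eq_zero]
        exact hμ0
      · exact hXB i T hT
      · rw [inter_comm]
        exact hXB i' S hS
      · obtain ⟨δ, A, hg, hA, hAa, rfl, -⟩ := hS
        obtain ⟨δ', A', hg', hA', hAa', rfl, -⟩ := hT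
        rcases lt_trichotomy δ δ' with hlt | rfl | hlt
        · exact hBB _ _ _ _ hlt hg' hA' hAa'
        · refine (mk_le_mk_of_subset (t := φ δ ⁻¹' (A ∩ A')) ?_).trans_lt
            ((mk_preimage_of_injective _ _ (hφ δ)).trans_lt (hmad.1.2.2 A hA A' hA' ?_))
          · exact fun x hx => ⟨hx.1.2, hx.2.2⟩
          · rintro rfl
            exact hST rfl
        · rw [inter_comm]
          exact hBB _ _ _ _ hlt hg hA hAa
  refine ⟨range X ∪ 𝓑, isMadFamily_of_exists_inter hAD fun C hC => ?_, ?_⟩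
  · by_contra! hcon
    obtain ⟨δ, f, hf1, hf2, hCδ, hlow⟩ := exists_critical hμ hK (hI.trans_lt h2) h hC fun i => by
      rw [inter_comm]
      exact hcon (X i) (Or.inl (mem_range_self i))
    have hg : Good δ (F δ) := hF δ f ⟨hf1, hf2⟩
    obtain ⟨A, hA, hAC⟩ := hmad.exists_inter (C := φ δ '' (C ∩ h ⁻¹' Iio δ))
      (by
        rintro _ ⟨x, -, rfl⟩
        exact ⟨a (p δ x), ha _, hmem _ x⟩)
      (by rw [mk_image_eq (hφ δ), hCδ])
    have hAa : A ∉ range a := by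
      rintro ⟨j, rfl⟩
      refine hAC.not_gt ?_
      refine (mk_le_mk_of_subset (t := φ δ '' (C ∩ h ⁻¹' Iio δ ∩ p δ ⁻¹' Iic j)) ?_).trans_lt ?_
      · rintro _ ⟨hxa, x, hx, rfl⟩
        exact ⟨x, ⟨hx, not_lt.1 fun hlt => hnot _ _ hlt x hxa⟩, rfl⟩
      · rw [mk_image_eq (hφ δ)]
        refine (mk_le_mk_of_subset ?_).trans_lt
          (mk_biUnion_lt hμ (Iic j) (hKI j) (fun j' => C ∩ h ⁻¹' Iic (F δ j')) ?_)
        · rintro x ⟨⟨hxC, hxδ⟩, hxj⟩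
          exact mem_biUnion hxj ⟨hxC, (hp δ x hg hxδ).1⟩
        · exact fun j' _ => hlow _ (hg.1 j')
    have hBC : μ ≤ #(B δ A ∩ C : Set μ.out) := by
      refine hAC.trans ?_
      rw [← mk_image_eq (s := B δ A ∩ C) (hφ δ)]
      refine mk_le_mk_of_subset ?_
      rintro _ ⟨hxA, x, ⟨hxC, hxδ⟩, rfl⟩
      exact ⟨x, ⟨⟨hxδ, hxA⟩, hxC⟩, rfl⟩
    have hBμ : #(B δ A) = μ := le_antisymm ((mk_set_le _).trans (mk_out μ).le)
      (hBC.trans (mk_le_mk_of_subset inter_subset_left))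
    exact (hcon _ (Or.inr ⟨δ, A, hg, hA, hAa, rfl, hBμ⟩)).not_ge hBC
  · have hsize : #(range X ∪ 𝓑 : Set (Set μ.out)) = lam := by
      refine le_antisymm ?_ ?_
      · have h𝓑 : #𝓑 ≤ lam := by
          have hsub : 𝓑 ⊆ range fun q : I × 𝒜 => B q.1 q.2.1 := by
            rintro S ⟨δ, A, -, hA, -, rfl, -⟩
            exact ⟨(δ, ⟨A, hA⟩), rfl⟩
          refine (mk_le_mk_of_subset hsub).trans (mk_range_le.trans ?_)
          rw [mk_prod, lift_id, lift_id, hI]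
          exact (mul_le_mul' le_rfl h1).trans (mul_eq_self hlam).le
        refine (mk_union_le _ _).trans ?_
        rw [mk_range_eq X hXinj, hI]
        exact (add_le_add le_rfl h𝓑).trans (add_eq_self hlam).le
      · rw [← hI, ← mk_range_eq X hXinj]
        exact mk_le_mk_of_subset subset_union_left
    exact ⟨hsize ▸ hcof.trans h1, hsize⟩
end

section
/- Let μ be a singular cardinal. If 2^{cf(μ)} < μ, then μ ∈ MAD(μ); that is, there exists a nontrivial μ-mad family of cardinality μ. -/
/-!
Let `κ = cf μ`, and let `Ω`, `K` be well-orders of types `μ` and `κ`. The ground set is identified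
with `Ω × Ω`, with first coordinate `a` and with a map `ρ` to `K`, obtained from the second
coordinate, such that `{x | a x ≤ α ∧ ρ x ≤ j}` always has size `< μ`.

The family contains the `μ` many columns `{x | a x = α}`. A set `C` of size `μ` almost disjoint from
all of them has a least `d : WithTop Ω` below which it has `μ` points. The segment below `d` is then the
increasing union of `κ` proper initial segments, recorded by a map `i` from it to `K` (`Good`,
`exists_good`). Such an `i` is fixed once for every `d` that admits one, and each `B ⊆ K × K` then
yields a set `blockSet` consisting of the points `x` below `d` with
`(i (a x), max (i (a x)) (ρ x)) ∈ B`.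

Let `B` range over a family `ℬ` that is maximal almost disjoint among the sets of size `κ` meeting
each initial block of columns of `K × K` in fewer than `κ` points (`exists_mad_admissible`). Blocks
over `d` are almost disjoint from each other and from everything below `d`
(`mk_blockSet_inter_blockSet_lt`, `mk_blockSet_inter_lt`), and maximality of `ℬ` provides a block
over `d` meeting the given `C` in `μ` points (`exists_blockSet_inter`). Since `#ℬ ≤ 2 ^ κ < μ`, the
columns and blocks together form a mad family with exactly `μ` members.
-/

universe u
open Cardinal

open Set

/-! ### Cardinalities of unions -/

theorem mk_iUnion_lt_of_le {X ι : Type u} {μ c : Cardinal.{u}} (hμ : ℵ₀ ≤ μ) (hι : #ι < μ)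
    (hc : c < μ) (F : ι → Set X) (hF : ∀ i, #(F i) ≤ c) : #(⋃ i, F i) < μ :=
  (mk_iUnion_le F).trans_lt <| mul_lt_of_lt hμ hι ((ciSup_le' hF).trans_lt hc)

theorem mk_iUnion_lt_of_cof {X ι : Type u} {μ : Cardinal.{u}} (hμ : ℵ₀ ≤ μ) (hι : #ι < μ.ord.cof)
    (F : ι → Set X) (hF : ∀ i, #(F i) < μ) : #(⋃ i, F i) < μ :=
  (mk_iUnion_le F).trans_lt <| mul_lt_of_lt hμ (hι.trans_le (Ordinal.cof_ord_le μ))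
    (Cardinal.iSup_lt_of_lt_cof_ord hι hF)

/-! ### A maximal family on `K × K` -/

/-- A subset of `K × K` is admissible if it has full size `#K` but meets every initial block of
columns `{p | p.1 ≤ i}` in fewer than `#K` points. -/
def Admissible {K : Type u} [LinearOrder K] (B : Set (K × K)) : Prop :=
  #B = #K ∧ ∀ i, #{p ∈ B | p.1 ≤ i} < #K

/-- A maximal almost disjoint family among the admissible subsets of `K × K` (obtained from Zorn).
Adding the columns would make it an ordinary `#K`-mad family on `K × K`. -/
theorem exists_mad_admissible (K : Type u) [LinearOrder K] :
    ∃ ℬ : Set (Set (K × K)), (∀ B ∈ ℬ, Admissible B) ∧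
      ℬ.Pairwise (fun B B' => #(B ∩ B' : Set (K × K)) < #K) ∧
      ∀ G, Admissible G → ∃ B ∈ ℬ, #K ≤ #(B ∩ G : Set (K × K)) := by
  obtain ⟨ℬ, hℬ⟩ := zorn_subset {ℬ : Set (Set (K × K)) | (∀ B ∈ ℬ, Admissible B) ∧
      ℬ.Pairwise (fun B B' => #(B ∩ B' : Set (K × K)) < #K)} (by
    intro c hc hchain
    refine ⟨⋃₀ c, ⟨?_, ?_⟩, fun s hs => subset_sUnion_of_mem hs⟩
    · rintro B ⟨s, hs, hB⟩
      exact (hc hs).1 B hB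
    · exact (pairwise_sUnion hchain.directedOn).2 fun s hs => (hc hs).2)
  refine ⟨ℬ, hℬ.prop.1, hℬ.prop.2, fun G hG => ?_⟩
  by_contra! hcon
  have hmem : G ∈ ℬ := by
    refine hℬ.le_of_ge (y := insert G ℬ) ⟨?_, ?_⟩ (subset_insert _ _) (mem_insert _ _)
    · rintro B (rfl | hB)
      exacts [hG, hℬ.prop.1 B hB]
    · refine (pairwise_insert).2 ⟨hℬ.prop.2, fun B hB _ => ⟨?_, hcon B hB⟩⟩
      rw [inter_comm]
      exact hcon B hB
  have := hcon G hmem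
  rw [inter_self, hG.1] at this
  exact this.false

/-! ### Columns and blocks -/

section Core
variable {X Ω K : Type u} [LinearOrder Ω] [LinearOrder K]

/-- `i` presents the initial segment `{α | α < d}` of `Ω` as a limit along `K`: a set of `α < d` is
bounded strictly below `d` if and only if its image under `i` is bounded in `K`. The endpoint `d`
is taken in `WithTop Ω`, so that the whole of `Ω` is included. -/
def Good (d : WithTop Ω) (i : Ω → K) : Prop :=
  (∀ j, ∃ β : Ω, (β : WithTop Ω) < d ∧ ∀ α : Ω, (α : WithTop Ω) < d → i α ≤ j → α ≤ β) ∧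
    ∀ β : Ω, (β : WithTop Ω) < d → ∃ j, ∀ α ≤ β, i α ≤ j

/-- The part of `X` over the segment below `d` that is coded by `B ⊆ K × K`. The second coordinate
is `max (i (a x)) (ρ x)` rather than `ρ x`, so that a bound on it also bounds `a x` below `d`;
this matters for `d = ⊤`, where the segment itself has size `μ`. -/
def blockSet (a : X → Ω) (ρ : X → K) (d : WithTop Ω) (i : Ω → K) (B : Set (K × K)) : Set X :=
  {x | (a x : WithTop Ω) < d ∧ (i (a x), max (i (a x)) (ρ x)) ∈ B}

variable {μ : Cardinal.{u}} {a : X → Ω} {ρ : X → K} {d : WithTop Ω} {i : Ω → K}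

theorem exists_snd_le (hbd : ∀ S : Set K, #S < #K → ∃ j, ∀ x ∈ S, x ≤ j)
    {S : Set (K × K)} (hS : #S < #K) : ∃ j, ∀ p ∈ S, p.2 ≤ j := by
  obtain ⟨j, hj⟩ := hbd (Prod.snd '' S) (mk_image_le.trans_lt hS)
  exact ⟨j, fun p hp => hj _ (mem_image_of_mem _ hp)⟩

/-- A block over `d` is almost disjoint from everything that lives strictly below `d`. -/
theorem mk_blockSet_inter_lt (hbd : ∀ S : Set K, #S < #K → ∃ j, ∀ x ∈ S, x ≤ j)
    (hsmall : ∀ α j, #{x | a x ≤ α ∧ ρ x ≤ j} < μ) (hi : Good d i)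
    {B : Set (K × K)} (hB : Admissible B) {β : Ω} (hβ : (β : WithTop Ω) < d) :
    #(blockSet a ρ d i B ∩ {x | a x ≤ β} : Set X) < μ := by
  obtain ⟨j₀, hj₀⟩ := hi.2 β hβ
  obtain ⟨j₁, hj₁⟩ := exists_snd_le hbd (hB.2 j₀)
  refine (mk_le_mk_of_subset ?_).trans_lt (hsmall β j₁)
  rintro x ⟨⟨-, hx⟩, hxβ⟩
  exact ⟨hxβ, (le_max_right _ _).trans (hj₁ _ ⟨hx, hj₀ _ hxβ⟩)⟩

/-- Blocks over the same `d` with almost disjoint codes are almost disjoint. -/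
theorem mk_blockSet_inter_blockSet_lt (hbd : ∀ S : Set K, #S < #K → ∃ j, ∀ x ∈ S, x ≤ j)
    (hsmall : ∀ α j, #{x | a x ≤ α ∧ ρ x ≤ j} < μ) (hi : Good d i)
    {B B' : Set (K × K)} (hB : #(B ∩ B' : Set (K × K)) < #K) :
    #(blockSet a ρ d i B ∩ blockSet a ρ d i B' : Set X) < μ := by
  obtain ⟨j, hj⟩ := exists_snd_le hbd hB
  obtain ⟨β, -, hβ⟩ := hi.1 j
  refine (mk_le_mk_of_subset ?_).trans_lt (hsmall β j)
  rintro x ⟨⟨hd, hx⟩, -, hx'⟩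
  have := hj _ ⟨hx, hx'⟩
  exact ⟨hβ _ hd ((le_max_left _ _).trans this), (le_max_right _ _).trans this⟩

/-- If `C` has size `μ` and meets every column in fewer than `μ` points, let `d` be least such that
`C` has `μ` points below `d`. Then `d` carries a presentation: send `α` to the first `j` for which
`C` has at most `m j` points up to `α`. -/
theorem exists_good [WellFoundedLT Ω] [WellFoundedLT K] (hμ : ℵ₀ ≤ μ)
    (hcof : ∃ s : Set Ω, IsCofinal s ∧ #s < μ) (hIic : ∀ α : Ω, #(Iic α) < μ)
    {m : K → Cardinal.{u}} (hm : Monotone m) (hmμ : ∀ j, m j < μ) (hmc : ∀ c < μ, ∃ j, c < m j)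
    (C : Set X) (hC : #C = μ) (hcol : ∀ α, #(C ∩ {x | a x = α} : Set X) < μ) :
    ∃ d : WithTop Ω, #(C ∩ {x | (a x : WithTop Ω) < d} : Set X) = μ ∧
      (∀ β : Ω, (β : WithTop Ω) < d → #(C ∩ {x | a x ≤ β} : Set X) < μ) ∧
      ∃ i : Ω → K, Good d i := by
  have hle : ∀ S : Set X, #(C ∩ S : Set X) ≤ μ := fun S =>
    (mk_le_mk_of_subset inter_subset_left).trans hC.le
  obtain ⟨d, hd, hmin⟩ := WellFounded.has_min (wellFounded_lt (α := WithTop Ω))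
    {d | #(C ∩ {x | (a x : WithTop Ω) < d} : Set X) = μ} ⟨⊤, by simpa using hC⟩
  have hlt : ∀ β : Ω, (β : WithTop Ω) < d → #(C ∩ {x | a x ≤ β} : Set X) < μ := by
    intro β hβ
    have h1 : #(C ∩ {x | (a x : WithTop Ω) < β} : Set X) < μ :=
      (hle _).lt_of_ne fun h => hmin _ h hβ
    refine (mk_le_mk_of_subset ?_).trans_lt
      ((mk_union_le _ _).trans_lt (add_lt_of_lt hμ h1 (hcol β)))
    rintro x ⟨hx, hxβ⟩
    rcases lt_or_eq_of_le hxβ with h | h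
    exacts [Or.inl ⟨hx, WithTop.coe_lt_coe.2 h⟩, Or.inr ⟨hx, h⟩]
  refine ⟨d, hd, hlt, ?_⟩
  classical
  obtain ⟨j₀, -⟩ := hmc 0 (aleph0_pos.trans_le hμ)
  have key : ∀ α : Ω, ∃ j, (α : WithTop Ω) < d → #(C ∩ {x | a x ≤ α} : Set X) ≤ m j ∧
      ∀ j', #(C ∩ {x | a x ≤ α} : Set X) ≤ m j' → j ≤ j' := by
    intro α
    by_cases hα : (α : WithTop Ω) < d
    · obtain ⟨j, hj, hj'⟩ := WellFounded.has_min (wellFounded_lt (α := K))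
        {j | #(C ∩ {x | a x ≤ α} : Set X) ≤ m j} ((hmc _ (hlt α hα)).imp fun _ h => h.le)
      exact ⟨j, fun _ => ⟨hj, fun j' h => not_lt.1 (hj' j' h)⟩⟩
    · exact ⟨j₀, fun h => absurd h hα⟩
  choose i hi using key
  have hmono : ∀ α β : Ω, α ≤ β →
      #(C ∩ {x | a x ≤ α} : Set X) ≤ #(C ∩ {x | a x ≤ β} : Set X) := fun α β h =>
    mk_le_mk_of_subset (inter_subset_inter_right _ fun x (hx : a x ≤ α) => hx.trans h)
  refine ⟨i, fun j => ?_, fun β hβ => ⟨i β, fun α hα => ?_⟩⟩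
  · by_contra! hcon
    have hall : ∀ β : Ω, (β : WithTop Ω) < d → #(C ∩ {x | a x ≤ β} : Set X) ≤ m j := by
      intro β hβ
      obtain ⟨α, hα, hij, hβα⟩ := hcon β hβ
      exact (hmono _ _ hβα.le).trans ((hi α hα).1.trans (hm hij))
    -- a set of fewer than `μ` elements cofinal in the segment below `d`
    obtain ⟨s, hs, hsμ, hsd⟩ : ∃ s : Set Ω, (∀ α : Ω, (α : WithTop Ω) < d → ∃ β ∈ s, α ≤ β) ∧
        #s < μ ∧ ∀ β ∈ s, (β : WithTop Ω) < d := by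
      induction d using WithTop.recTopCoe with
      | top =>
        obtain ⟨s, hs, hsμ⟩ := hcof
        exact ⟨s, fun α _ => hs α, hsμ, fun β _ => WithTop.coe_lt_top β⟩
      | coe e =>
        refine ⟨Iio e, fun α hα => ⟨α, WithTop.coe_lt_coe.1 hα, le_rfl⟩,
          (mk_le_mk_of_subset Iio_subset_Iic_self).trans_lt (hIic e),
          fun β hβ => WithTop.coe_lt_coe.2 hβ⟩
    have := mk_iUnion_lt_of_le hμ hsμ (hmμ j) (fun β : s => C ∩ {x | a x ≤ β})
      fun β => hall β (hsd β β.2)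
    refine this.not_ge (hd.symm.le.trans (mk_le_mk_of_subset ?_))
    rintro x ⟨hx, hxd⟩
    obtain ⟨β, hβ, hxβ⟩ := hs _ hxd
    exact mem_iUnion.2 ⟨⟨β, hβ⟩, hx, hxβ⟩
  · exact (hi α ((WithTop.coe_le_coe.2 hα).trans_lt hβ)).2 _ ((hmono _ _ hα).trans (hi β hβ).1)

/-- For `C` and `d` as in `exists_good`, some block over `d` meets `C` in `μ` points. Choosing for
each `j` a pair `g j` whose cell contains at least `m j` points of `C` makes `range g` admissible,
and any `#K` of these cells contain `μ` points of `C` altogether; hence a member of the maximal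
family that meets `range g` in `#K` points works. -/
theorem exists_blockSet_inter (hμ : ℵ₀ ≤ μ) (hK : ℵ₀ ≤ #K) (hKμ : #K < μ) (hKcof : #K = μ.ord.cof)
    (hIicK : ∀ j : K, #(Iic j) < #K)
    {m : K → Cardinal.{u}} (hm : Monotone m) (hmμ : ∀ j, m j < μ) (hmc : ∀ c < μ, ∃ j, c < m j)
    {ℬ : Set (Set (K × K))} (hℬ : ∀ G, Admissible G → ∃ B ∈ ℬ, #K ≤ #(B ∩ G : Set (K × K)))
    (C : Set X) (hd : #(C ∩ {x | (a x : WithTop Ω) < d} : Set X) = μ)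
    (hlt : ∀ β : Ω, (β : WithTop Ω) < d → #(C ∩ {x | a x ≤ β} : Set X) < μ)
    (hi : Good d i) : ∃ B ∈ ℬ, μ ≤ #(C ∩ blockSet a ρ d i B : Set X) := by
  let E : K × K → Set X := fun p =>
    C ∩ {x | (a x : WithTop Ω) < d ∧ (i (a x), max (i (a x)) (ρ x)) = p}
  have hE : ∀ j, ∃ p, m j ≤ #(E p) := by
    intro j
    by_contra! hcon
    have := mk_iUnion_lt_of_le hμ (ι := K × K) (by simpa [mul_eq_self hK] using hKμ) (hmμ j) E
      fun p => (hcon p).le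
    refine this.not_ge (hd.symm.le.trans (mk_le_mk_of_subset ?_))
    rintro x ⟨hx, hxd⟩
    exact mem_iUnion.2 ⟨_, hx, hxd, rfl⟩
  choose g hg using hE
  have hsub : ∀ (H : Set (K × K)) (Y : Set X), #Y < μ → (∀ p ∈ H, E p ⊆ Y) →
      ∃ j, ∀ j', g j' ∈ H → j' ≤ j := by
    intro H Y hY hHY
    obtain ⟨j, hj⟩ := hmc _ hY
    refine ⟨j, fun j' hj' => ?_⟩
    by_contra! hlt'
    exact (hj.trans_le ((hm hlt'.le).trans (hg j'))).not_ge (mk_le_mk_of_subset (hHY _ hj'))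
  have hsub' : ∀ (H : Set (K × K)) (Y : Set X), H ⊆ range g → #Y < μ → (∀ p ∈ H, E p ⊆ Y) →
      #H < #K := by
    intro H Y hH hY hHY
    obtain ⟨j, hj⟩ := hsub H Y hY hHY
    refine (mk_le_mk_of_subset (t := g '' Iic j) ?_).trans_lt (mk_image_le.trans_lt (hIicK j))
    intro p hp
    obtain ⟨j', rfl⟩ := hH hp
    exact mem_image_of_mem _ (hj j' hp)
  have hcol : ∀ j, ∃ Y : Set X, #Y < μ ∧ ∀ p : K × K, p.1 ≤ j → E p ⊆ Y := by
    intro j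
    obtain ⟨β, hβ, hβ'⟩ := hi.1 j
    refine ⟨_, hlt β hβ, ?_⟩
    rintro p hp x ⟨hx, hxd, rfl⟩
    exact ⟨hx, hβ' _ hxd hp⟩
  have hadm : Admissible (range g) := by
    refine ⟨mk_range_le.antisymm ?_, fun j => ?_⟩
    -- fewer than `cf μ` cells, each of size `< μ`, cannot contain all the sets `E (g j)`
    · by_contra! hcon
      have hY : #(⋃ p : range g, E p) < μ := by
        refine mk_iUnion_lt_of_cof hμ (hKcof ▸ hcon) _ fun p => ?_
        obtain ⟨Y, hY, hY'⟩ := hcol p.1.1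
        exact (mk_le_mk_of_subset (hY' _ le_rfl)).trans_lt hY
      obtain ⟨j, hj⟩ := hsub (range g) _ hY fun p hp =>
        subset_iUnion (fun p : range g => E p) ⟨p, hp⟩
      refine (hIicK j).ne ?_
      rw [eq_univ_of_forall (s := Iic j) fun j' => hj j' ⟨j', rfl⟩, mk_univ]
    · obtain ⟨Y, hY, hY'⟩ := hcol j
      exact hsub' _ Y (sep_subset _ _) hY fun p hp => hY' p hp.2
  obtain ⟨B, hB, hBG⟩ := hℬ _ hadm
  refine ⟨B, hB, ?_⟩
  by_contra! hcon
  refine (hsub' (B ∩ range g) _ inter_subset_right hcon ?_).not_ge hBG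
  rintro p ⟨hp, -⟩ x ⟨hx, hxd, rfl⟩
  exact ⟨hx, hxd, hp⟩

/-- The mad family, on a ground set mapped to `Ω` by `a` (with columns of size `μ`) and to `K` by
`ρ`: it consists of the columns and of those blocks that have size `μ`. -/
theorem mem_MADSet_of_grid [WellFoundedLT Ω] [WellFoundedLT K] {a : μ.out → Ω} {ρ : μ.out → K}
    (hμ : ℵ₀ ≤ μ) (hΩ : #Ω = μ) (hK : ℵ₀ ≤ #K) (hKμ : 2 ^ #K < μ) (hKcof : #K = μ.ord.cof)
    (hcof : ∃ s : Set Ω, IsCofinal s ∧ #s < μ) (hIic : ∀ α : Ω, #(Iic α) < μ)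
    (hbd : ∀ S : Set K, #S < #K → ∃ j, ∀ x ∈ S, x ≤ j) (hIicK : ∀ j : K, #(Iic j) < #K)
    {m : K → Cardinal.{u}} (hm : Monotone m) (hmμ : ∀ j, m j < μ) (hmc : ∀ c < μ, ∃ j, c < m j)
    (hcol : ∀ α, #{x | a x = α} = μ) (hsmall : ∀ α j, #{x | a x ≤ α ∧ ρ x ≤ j} < μ) :
    μ ∈ MADSet μ := by
  obtain ⟨ℬ, hadm, hpair, hmax⟩ := exists_mad_admissible K
  obtain ⟨j₀, -⟩ := hmc 0 (aleph0_pos.trans_le hμ)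
  have hI : ∀ d : WithTop Ω, ∃ i : Ω → K, (∃ i' : Ω → K, Good d i') → Good d i := by
    intro d
    by_cases h : ∃ i' : Ω → K, Good d i'
    · exact ⟨h.choose, fun _ => h.choose_spec⟩
    · exact ⟨fun _ => j₀, fun h' => absurd h' h⟩
  choose I hI using hI
  let col : Ω → Set μ.out := fun α => {x | a x = α}
  let 𝒮 : Set (Set μ.out) := {A | ∃ d, ∃ B ∈ ℬ, Good d (I d) ∧ A = blockSet a ρ d (I d) B ∧ #A = μ}
  have hcolne : ∀ α, (col α).Nonempty := fun α => by
    rw [← nonempty_coe_sort, ← mk_ne_zero_iff]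
    exact (hcol α).trans_ne (aleph0_pos.trans_le hμ).ne'
  have hcolinj : Function.Injective col := fun α α' h => by
    obtain ⟨x, hx⟩ := hcolne α
    have hx' : x ∈ col α' := h ▸ hx
    exact hx.symm.trans hx'
  have hcard : #(range col ∪ 𝒮 : Set (Set μ.out)) = μ := by
    refine le_antisymm ?_ ?_
    · refine (mk_union_le _ _).trans ?_
      have h1 : #(range col) ≤ μ := mk_range_le.trans hΩ.le
      have h2 : #𝒮 ≤ μ := by
        have hsub : 𝒮 ⊆ range fun p : WithTop Ω × Set (K × K) => blockSet a ρ p.1 (I p.1) p.2 := by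
          rintro A ⟨d, B, -, -, rfl, -⟩
          exact ⟨(d, B), rfl⟩
        refine (mk_le_mk_of_subset hsub).trans (mk_range_le.trans ?_)
        have h3 : #(WithTop Ω) = μ := by
          rw [← add_one_eq hμ, ← hΩ]
          exact mk_option
        rw [mk_prod, lift_id, lift_id, h3, mk_set, mk_prod, lift_id, mul_eq_self hK]
        exact mul_le_of_le hμ le_rfl hKμ.le
      exact add_le_of_le hμ h1 h2
    · calc μ = #(range col) := by rw [mk_range_eq _ hcolinj, hΩ]
        _ ≤ _ := mk_le_mk_of_subset subset_union_left
  have hU : ⋃₀ (range col ∪ 𝒮) = Set.univ :=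
    eq_univ_of_forall fun x => ⟨col (a x), Or.inl ⟨_, rfl⟩, rfl⟩
  have hcolS : ∀ α, ∀ A ∈ 𝒮, #(col α ∩ A : Set μ.out) < μ := by
    rintro α A ⟨d, B, hB, hd, rfl, -⟩
    by_cases hα : (α : WithTop Ω) < d
    · refine (mk_le_mk_of_subset ?_).trans_lt
        (mk_blockSet_inter_lt hbd hsmall hd (hadm B hB) hα)
      rintro x ⟨hx, hx'⟩
      exact ⟨hx', hx.le⟩
    · have : col α ∩ blockSet a ρ d (I d) B = ∅ := by
        refine eq_empty_of_forall_notMem ?_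
        rintro x ⟨rfl, hx', -⟩
        exact hα hx'
      rw [this, mk_eq_zero]
      exact aleph0_pos.trans_le hμ
  have hSS : ∀ d d' : WithTop Ω, d' < d → ∀ B ∈ ℬ, ∀ B', Good d (I d) →
      #(blockSet a ρ d (I d) B ∩ blockSet a ρ d' (I d') B' : Set μ.out) < μ := by
    intro d d' hdd B hB B' hd
    obtain ⟨β, rfl⟩ := WithTop.ne_top_iff_exists.1 hdd.ne_top
    refine (mk_le_mk_of_subset ?_).trans_lt
        (mk_blockSet_inter_lt hbd hsmall hd (hadm B hB) hdd)
    rintro x ⟨hx, hx', -⟩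
    exact ⟨hx, (WithTop.coe_lt_coe.1 hx').le⟩
  refine ⟨range col ∪ 𝒮, ⟨⟨?_, ?_, ?_⟩, ?_⟩, ?_, hcard⟩
  · rw [hU, mk_univ, mk_out]
  · rintro A (⟨α, rfl⟩ | ⟨d, B, -, -, -, hA⟩)
    exacts [hcol α, hA]
  · rintro A (⟨α, rfl⟩ | hA) A' (⟨α', rfl⟩ | hA') hne
    · have : col α ∩ col α' = ∅ := by
        refine eq_empty_of_forall_notMem ?_
        rintro x ⟨rfl, hx'⟩
        exact hne (congrArg col hx')
      rw [this, mk_eq_zero]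
      exact aleph0_pos.trans_le hμ
    · exact hcolS α _ hA'
    · rw [inter_comm]
      exact hcolS α' _ hA
    · obtain ⟨d, B, hB, hd, rfl, -⟩ := hA
      obtain ⟨d', B', hB', hd', rfl, -⟩ := hA'
      rcases lt_trichotomy d d' with h | rfl | h
      · rw [inter_comm]
        exact hSS _ _ h _ hB' _ hd'
      · exact mk_blockSet_inter_blockSet_lt hbd hsmall hd
          (hpair hB hB' fun h => hne (by rw [h]))
      · exact hSS _ _ h _ hB _ hd
  · rintro ⟨C, -, hC, -, hCcard, hCad⟩
    have hCμ : #C = μ := hCcard C (mem_insert _ _)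
    have hCA : ∀ A ∈ range col ∪ 𝒮, #(C ∩ A : Set μ.out) < μ := fun A hA =>
      hCad C (mem_insert _ _) A (mem_insert_of_mem _ hA) fun h => hC (h ▸ hA)
    obtain ⟨d, hd, hlt, hgood⟩ := exists_good hμ hcof hIic hm hmμ hmc C hCμ
      fun α => hCA _ (Or.inl ⟨α, rfl⟩)
    obtain ⟨B, hB, hBC⟩ := exists_blockSet_inter (ρ := ρ) hμ hK ((cantor _).trans hKμ) hKcof hIicK
      hm hmμ hmc hmax C hd hlt (hI d hgood)
    refine (hCA _ (Or.inr ⟨d, B, hB, hI d hgood, rfl, le_antisymm ?_ ?_⟩)).not_ge hBC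
    · exact (mk_set_le _).trans (mk_out μ).le
    · exact hBC.trans (mk_le_mk_of_subset inter_subset_right)
  · rw [hcard]
    exact Ordinal.cof_ord_le μ

end Core

/-- For a singular cardinal μ, if 2^{cf μ} < μ then μ ∈ MAD(μ). -/
theorem stmt14 (μ : Cardinal.{u}) (hμ : ℵ₀ ≤ μ) (hsing : μ.ord.cof < μ)
    (h : 2 ^ μ.ord.cof < μ) : μ ∈ MADSet μ := by
  have hlim : Order.IsSuccLimit μ.ord := isSuccLimit_ord hμ
  have hκ : ℵ₀ ≤ μ.ord.cof := Ordinal.aleph0_le_cof_iff.2 (Ordinal.one_lt_cof_iff.2 hlim)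
  let Ω := μ.ord.ToType
  let K := μ.ord.cof.ord.ToType
  have hΩ : #Ω = μ := mk_ord_toType μ
  have hK : #K = μ.ord.cof := mk_ord_toType _
  have hIic : ∀ α : Ω, #(Iic α) < μ := fun α =>
    (mk_Iic_lt α (by simp [Ω]) (hμ.trans_eq hΩ.symm)).trans_eq hΩ
  have hIicK : ∀ j : K, #(Iic j) < #K := fun j => mk_Iic_lt j (by simp [K]) (hK ▸ hκ)
  have hbd : ∀ S : Set K, #S < #K → ∃ j, ∀ x ∈ S, x ≤ j := by
    intro S hS
    have : ¬ IsCofinal S := fun hc => by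
      have := Order.cof_le hc
      rw [Ordinal.cof_toType, Ordinal.cof_ord_cof, ← hK] at this
      exact this.not_gt hS
    simp only [IsCofinal, not_forall, not_exists, not_and, not_le] at this
    exact this.imp fun j hj x hx => (hj x hx).le
  obtain ⟨s, hs, hsκ⟩ := Order.exists_cof_eq (α := Ω)
  have hscard : #s = μ.ord.cof := hsκ.trans (Ordinal.cof_toType _)
  obtain ⟨e⟩ := Cardinal.eq.1 (hK.trans hscard.symm)
  -- an increasing `K`-indexed exhaustion of `Ω` by sets of size `< μ`
  let L : K → Set Ω := fun j => ⋃ j' : Iic j, Iic (e j' : Ω)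
  have hLmono : Monotone L := fun j j' hj =>
    iUnion_subset fun k => subset_iUnion (fun k : Iic j' => Iic (e k : Ω)) ⟨k, k.2.trans hj⟩
  have hL : ∀ j, #(L j) < μ := fun j =>
    mk_iUnion_lt_of_cof hμ ((hIicK j).trans_eq hK) _ fun _ => hIic _
  have hLex : ∀ ξ, ∃ j, ξ ∈ L j := fun ξ => by
    obtain ⟨η, hη, hξ⟩ := hs ξ
    exact ⟨e.symm ⟨η, hη⟩, mem_iUnion.2 ⟨⟨e.symm ⟨η, hη⟩, mem_Iic.2 le_rfl⟩, by simpa using hξ⟩⟩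
  choose r hr using hLex
  have hLc : ∀ c < μ, ∃ j, c < #(L j) := by
    intro c hc
    by_contra! hcon
    refine (mk_iUnion_lt_of_le hμ (hK ▸ hsing) hc L hcon).ne ?_
    rw [eq_univ_of_forall fun ξ => mem_iUnion.2 ⟨r ξ, hr ξ⟩, mk_univ, hΩ]
  obtain ⟨f⟩ : Nonempty (μ.out ≃ Ω × Ω) := Cardinal.eq.1 (by
    rw [mk_out, ← mul_def, hΩ, mul_eq_self hμ])
  refine mem_MADSet_of_grid (Ω := Ω) (K := K) (a := fun x => (f x).1) (ρ := fun x => r (f x).2)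
    hμ hΩ (hK ▸ hκ) (hK ▸ h) hK ⟨s, hs, hscard ▸ hsing⟩ hIic hbd hIicK
    (m := fun j => #(L j)) (fun j j' hj => mk_le_mk_of_subset (hLmono hj)) hL hLc ?_ ?_
  · intro α
    let e' : {x // (f x).1 = α} ≃ Ω :=
      ⟨fun x => (f x).2, fun ξ => ⟨f.symm (α, ξ), by simp⟩, ?_, ?_⟩
    · exact (mk_congr e').trans hΩ
    · rintro ⟨x, rfl⟩
      simp
    · intro ξ
      simp
  · intro α j
    have : #(Iic α ×ˢ L j) < μ := by
      rw [mk_setProd]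
      exact mul_lt_of_lt hμ (hIic α) (hL j)
    refine (mk_le_of_injective (f := fun x => ⟨f x, x.2.1, hLmono x.2.2 (hr _)⟩) ?_).trans_lt this
    intro x y hxy
    simpa [Subtype.ext_iff] using hxy
end
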